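/- arXiv:2005.12049 — 4 statements merged into one kernel-verified Lean document; each statement's English description precedes it below -/
import Mathlib

section
/- Codendriform (unshuffle) relations for cuts of non-crossing partitions: for every word w of non-crossing partitions containing at least one block, the reduced half-coproducts Δ_≺ and Δ_≻ and reduced coproduct Δ = Δ_≺ + Δ_≻ on the linear span of words of non-crossing partitions satisfy the three identities (Δ_≺ ⊠ id) ∘ Δ_≺ (w) = (id ⊠ Δ) ∘ Δ_≺ (w), (Δ_≻ ⊠ id) ∘ Δ_≺ (w) = (id ⊠ Δ_≺) ∘ Δ_≻ (w), and (Δ ⊠ id) ∘ Δ_≻ (w) = (id ⊠ Δ_≻) ∘ Δ_≻ (w); each side equals the sum over compatible double cuts (L, M, U) of w with the distinguished block lying, respectively, in L, in M, and in U, of L ⊠ M ⊠ U. -/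
/-!
In each of the three identities both sides count the same double cuts `(L, M, U)`: those with the
distinguished block in `L`, in `M`, or in `U`, and with the other two parts nontrivial.

For a single partition `P`, cutting twice from below means choosing a lowerset `L'` of `P` and then
a lowerset `L` of `L'`; cutting twice from above means choosing a lowerset `L` and then cutting each
letter of its upperset tuple. Both amount to a chain `L ⊆ L'` of lowersets: lowersets `M` of `P ∖ L`
correspond to `L' = L ∪ M` (`sum_lowersets_chain`), and since `P ∖ L` is the disjoint union of the
gaps of `L`, which are incomparable for the nesting order, a lowerset `M` of it is an independent
choice of a lowerset in every gap (`sum_lowersets_union`, `wordCuts_incomparable`). The double cut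
obtained is the same on both sides because the gaps of the gaps of `L`, read from left to right,
are the gaps of `L ∪ M` (`tupleBlocks_union`). All this is done for block sets on arbitrary ground
sets, since the lower part and the gaps are relabelled after each cut; relabelling is an isomorphism
for nesting (`lowersets_standalone`, `tupleOf_standalone`). If the distinguished block is not in
`L`, it lies in the first gap of `L` and is the distinguished block of the upperset tuple, so the
three positions of that block in the chain are read off in the same way from both sides
(`recut_LL`, `recut_LR`, `recut_RR`).

Words reduce to their first nonempty letter, because cutting twice is multiplicative for
concatenation (`recutLower_mul`, `recutUpper_mul`, `recut_word`). Passing to reduced cuts only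
discards double cuts with a trivial part among the two not holding the distinguished block
(`recutLower_filter`, `recutUpper_filter`). Cuts are kept in multisets, of which the coproducts are
the formal sums.
-/

/-!
Preliminaries: set partitions of `[n] = {1,…,n}` encoded as `Finset (Finset ℕ)`,
the non-crossing condition, and the gap-insertion composite `ρ(π; α₁,…,α_{n+1})`.
Gaps are indexed by `0,…,n` (gap `i` sits between the elements `i` and `i+1`,
gap `0` before `1`, gap `n` after `n`).
-/

/-- `π` is a partition of `[n] = {1,…,n}` into nonempty blocks. -/
def IsPartitionOn (n : ℕ) (π : Finset (Finset ℕ)) : Prop :=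
  (∀ B ∈ π, B.Nonempty) ∧ (∀ B ∈ π, ∀ x ∈ B, x ∈ Finset.Icc 1 n) ∧
    (∀ x ∈ Finset.Icc 1 n, ∃! B, B ∈ π ∧ x ∈ B)

/-- `π` is non-crossing: there are no `a < c < b < d` with `a, b` in one block and
`c, d` in a different block. -/
def IsNoncrossing (π : Finset (Finset ℕ)) : Prop :=
  ∀ B ∈ π, ∀ C ∈ π, B ≠ C →
    ∀ a ∈ B, ∀ b ∈ B, ∀ c ∈ C, ∀ d ∈ C, ¬(a < c ∧ c < b ∧ b < d)

/-- `gapShift k m = k₀ + ⋯ + k_{m-1}`, the total size of the partitions inserted in the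
gaps strictly before position `m`. -/
def gapShift (k : ℕ → ℕ) (m : ℕ) : ℕ := ∑ l ∈ Finset.range m, k l

/-- The gap-insertion composite `ρ(π; α₀,…,α_n)` of a partition `π` of `[n]` with
partitions `α i` of `[k i]` (`0 ≤ i ≤ n`, gaps indexed from `0`):
the blocks of `α i` are shifted upward by `i + k₀ + ⋯ + k_{i-1}`, and in the blocks of `π`
each element `j` is replaced by `j + k₀ + ⋯ + k_{j-1}`. -/
def gapInsert (n : ℕ) (k : ℕ → ℕ) (π : Finset (Finset ℕ))
    (α : ℕ → Finset (Finset ℕ)) : Finset (Finset ℕ) :=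
  ((Finset.range (n + 1)).biUnion fun i =>
      (α i).image fun B => B.image fun x => x + i + gapShift k i)
    ∪ π.image fun B => B.image fun j => j + gapShift k j

open scoped Classical

/-- `x` lies in the convex hull `Conv(W) = [min W, max W]` of `W`. -/
def InConv (x : ℕ) (W : Finset ℕ) : Prop :=
  (∃ a ∈ W, a ≤ x) ∧ (∃ b ∈ W, x ≤ b)

/-- `V ⊆ Conv(W)`. -/
def SubConv (V W : Finset ℕ) : Prop := ∀ v ∈ V, InConv v W

/-- A lowerset of a partition `π`: a set `L` of blocks of `π` such that whenever
`V ∈ L` and `V ⊆ Conv(W)` for a block `W` of `π`, also `W ∈ L`. -/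
def IsLowerset (π L : Finset (Finset ℕ)) : Prop :=
  L ⊆ π ∧ ∀ V ∈ L, ∀ W ∈ π, SubConv V W → W ∈ L

/-- Order-preserving relabelling of a subset `V` of the linearly ordered set `S` onto an
initial segment of the positive integers: `x ↦ #{s ∈ S : s ≤ x}`. -/
def relabel (S : Finset ℕ) (V : Finset ℕ) : Finset ℕ :=
  V.image fun x => (S.filter (· ≤ x)).card

/-- The standalone partition of a set `L` of blocks: restrict to the points of `⋃ L`
and relabel order-preservingly. -/
def standalone (L : Finset (Finset ℕ)) : Finset (Finset ℕ) :=
  L.image (relabel (L.sup id))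

/-- The `i`-th gap (`0`-indexed) of the subset `S` inside `[n]`: the elements of
`[n] ∖ S` with exactly `i` elements of `S` below them. -/
def gapSet (n : ℕ) (S : Finset ℕ) (i : ℕ) : Finset ℕ :=
  (Finset.Icc 1 n \ S).filter fun x => (S.filter (· < x)).card = i

/-- The `i`-th member (`0`-indexed) of the complementary upperset tuple of a lowerset
`L` of `π`: the blocks of `π ∖ L` lying in the `i`-th gap of `⋃ L`, relabelled. -/
def compUpper (n : ℕ) (π L : Finset (Finset ℕ)) (i : ℕ) : Finset (Finset ℕ) :=
  ((π \ L).filter fun V => V ⊆ gapSet n (L.sup id) i).image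
    (relabel (gapSet n (L.sup id) i))

/-- A block is convex if it equals its convex hull. -/
def IsConvexBlock (V : Finset ℕ) : Prop :=
  ∀ x ∈ V, ∀ z ∈ V, ∀ y, x ≤ y → y ≤ z → y ∈ V

/-- An interval partition: all blocks are convex. -/
def IsIntervalPartition (π : Finset (Finset ℕ)) : Prop :=
  ∀ V ∈ π, IsConvexBlock V

/-- An outer block of `π`: a block not contained in the convex hull of any other block. -/
def IsOuterBlock (π : Finset (Finset ℕ)) (V : Finset ℕ) : Prop :=
  V ∈ π ∧ ∀ W ∈ π, W ≠ V → ¬ SubConv V W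

/-- The size of the ground set of a partition (the largest partitioned point). -/
def psize (π : Finset (Finset ℕ)) : ℕ := (π.sup id).sup id

/-- `π` is a valid non-crossing partition (of `[psize π]`). -/
def ValidNC (π : Finset (Finset ℕ)) : Prop :=
  IsPartitionOn (psize π) π ∧ IsNoncrossing π

/-- The distinguished block of a partition: the block containing the least partitioned
point. -/
def distBlock (π : Finset (Finset ℕ)) : Finset ℕ :=
  (π.filter fun V => ∃ x ∈ V, ∀ y ∈ π.sup id, x ≤ y).sup id

/-- Words of non-crossing partitions (the monomial basis of the bicollection `N`). -/
abbrev NCWord := List (Finset (Finset ℕ))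

/-- The lowersets of a partition, as a finite set. -/
noncomputable def lowersets (π : Finset (Finset ℕ)) : Finset (Finset (Finset ℕ)) :=
  π.powerset.filter (IsLowerset π)

/-- The complementary upperset tuple of a lowerset `L` of `π`, as a word. -/
noncomputable def tupleOf (π L : Finset (Finset ℕ)) : NCWord :=
  (List.range ((L.sup id).card + 1)).map (compUpper (psize π) π L)

/-- The number of blocks of a word of partitions. -/
def wblocks (w : NCWord) : ℕ := (w.map Finset.card).sum

/-- The full cut coproduct `w ↦ Σ_{cuts} (lower part) ⊠ (upper part)` on words of
non-crossing partitions (including the trivial cuts), with values in the free module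
on pairs of words. -/
noncomputable def fullCop : NCWord → ((NCWord × NCWord) →₀ ℂ)
  | [] => Finsupp.single ([], []) 1
  | π :: w =>
    ∑ L ∈ lowersets π, (fullCop w).sum fun ab c =>
      Finsupp.single (standalone L :: ab.1, tupleOf π L ++ ab.2) c

/-- The cuts whose lower part contains the distinguished block. -/
noncomputable def fullCopL : NCWord → ((NCWord × NCWord) →₀ ℂ)
  | [] => 0
  | π :: w =>
    if π = ∅ then
      (fullCopL w).sum fun ab c =>
        Finsupp.single ((∅ : Finset (Finset ℕ)) :: ab.1,
          (∅ : Finset (Finset ℕ)) :: ab.2) c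
    else
      ∑ L ∈ (lowersets π).filter (fun L => distBlock π ∈ L),
        (fullCop w).sum fun ab c =>
          Finsupp.single (standalone L :: ab.1, tupleOf π L ++ ab.2) c

/-- The cuts whose upper part contains the distinguished block. -/
noncomputable def fullCopR : NCWord → ((NCWord × NCWord) →₀ ℂ)
  | [] => 0
  | π :: w =>
    if π = ∅ then
      (fullCopR w).sum fun ab c =>
        Finsupp.single ((∅ : Finset (Finset ℕ)) :: ab.1,
          (∅ : Finset (Finset ℕ)) :: ab.2) c
    else
      ∑ L ∈ (lowersets π).filter (fun L => distBlock π ∉ L),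
        (fullCop w).sum fun ab c =>
          Finsupp.single (standalone L :: ab.1, tupleOf π L ++ ab.2) c

/-- The reduced coproduct `Δ`: cuts with both parts containing at least one block. -/
noncomputable def redCop (w : NCWord) : (NCWord × NCWord) →₀ ℂ :=
  (fullCop w).filter fun ab => wblocks ab.1 ≠ 0 ∧ wblocks ab.2 ≠ 0

/-- The reduced left half-coproduct `Δ_≺`: the distinguished block lies in the lower
part, and the upper part is nontrivial. -/
noncomputable def redCopL (w : NCWord) : (NCWord × NCWord) →₀ ℂ :=
  (fullCopL w).filter fun ab => wblocks ab.2 ≠ 0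

/-- The reduced right half-coproduct `Δ_≻`: the distinguished block lies in the upper
part, and the lower part is nontrivial. -/
noncomputable def redCopR (w : NCWord) : (NCWord × NCWord) →₀ ℂ :=
  (fullCopR w).filter fun ab => wblocks ab.1 ≠ 0

/-- `(G ⊠ id) ∘ F`: cut again the lower part. -/
noncomputable def cutLower (F G : NCWord → ((NCWord × NCWord) →₀ ℂ)) (w : NCWord) :
    (NCWord × NCWord × NCWord) →₀ ℂ :=
  (F w).sum fun ab c => (G ab.1).sum fun uv d =>
    Finsupp.single (uv.1, uv.2, ab.2) (c * d)

/-- `(id ⊠ G) ∘ F`: cut again the upper part. -/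
noncomputable def cutUpper (F G : NCWord → ((NCWord × NCWord) →₀ ℂ)) (w : NCWord) :
    (NCWord × NCWord × NCWord) →₀ ℂ :=
  (F w).sum fun ab c => (G ab.2).sum fun uv d =>
    Finsupp.single (ab.1, uv.1, uv.2) (c * d)

/-! ### Block sets on arbitrary ground sets -/

/-- A non-crossing partition of an arbitrary finite set of naturals: nonempty, pairwise disjoint,
pairwise non-crossing blocks.  Sub-collections of blocks keep this property, without any
relabelling. -/
def GoodBlocks (P : Finset (Finset ℕ)) : Prop :=
  (∀ B ∈ P, B.Nonempty) ∧ (∀ B ∈ P, ∀ C ∈ P, ∀ x, x ∈ B → x ∈ C → B = C) ∧ IsNoncrossing P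

/-- The number of elements of `A` strictly below `x`: the index of the gap of `A` containing `x`. -/
def cntLt (A : Finset ℕ) (x : ℕ) : ℕ := (A.filter (· < x)).card

/-- The rank of `x` in `A`; `relabel A` is the image under this map. -/
def rk (A : Finset ℕ) (x : ℕ) : ℕ := (A.filter (· ≤ x)).card

/-- The blocks of `P ∖ L` lying in the `i`-th gap of the ground set of `L`, not relabelled. -/
noncomputable def gapBlocks (P L : Finset (Finset ℕ)) (i : ℕ) : Finset (Finset ℕ) :=
  (P \ L).filter fun V => ∀ v ∈ V, cntLt (L.sup id) v = i

/-- The complementary upperset tuple of `L` in a block set `P` on an arbitrary ground set. -/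
noncomputable def tupleBlocks (P L : Finset (Finset ℕ)) : NCWord :=
  (List.range ((L.sup id).card + 1)).map fun i => standalone (gapBlocks P L i)

theorem mem_supp {P : Finset (Finset ℕ)} {x : ℕ} : x ∈ P.sup id ↔ ∃ V ∈ P, x ∈ V := by
  simp [Finset.mem_sup]

theorem supp_mono {P Q : Finset (Finset ℕ)} (h : P ⊆ Q) : P.sup id ⊆ Q.sup id :=
  Finset.sup_mono h

theorem subset_supp {P : Finset (Finset ℕ)} {V : Finset ℕ} (h : V ∈ P) : V ⊆ P.sup id :=
  fun _ hx => mem_supp.2 ⟨V, h, hx⟩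

theorem mem_lowersets {P L : Finset (Finset ℕ)} : L ∈ lowersets P ↔ IsLowerset P L := by
  simp only [lowersets, Finset.mem_filter, Finset.mem_powerset]
  exact ⟨fun h => h.2, fun h => ⟨h.1, h⟩⟩

theorem subConv_of_subset {V W : Finset ℕ} (h : V ⊆ W) : SubConv V W :=
  fun v hv => ⟨⟨v, h hv, le_rfl⟩, ⟨v, h hv, le_rfl⟩⟩

theorem GoodBlocks.subset {P Q : Finset (Finset ℕ)} (hP : GoodBlocks P) (h : Q ⊆ P) :
    GoodBlocks Q :=
  ⟨fun B hB => hP.1 B (h hB), fun B hB C hC => hP.2.1 B (h hB) C (h hC),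
    fun B hB C hC => hP.2.2 B (h hB) C (h hC)⟩

theorem gapBlocks_subset (P L : Finset (Finset ℕ)) (i : ℕ) : gapBlocks P L i ⊆ P :=
  (Finset.filter_subset _ _).trans Finset.sdiff_subset

theorem cntLt_mono (A : Finset ℕ) {x y : ℕ} (h : x ≤ y) : cntLt A x ≤ cntLt A y :=
  Finset.card_le_card fun z hz => by
    simp only [Finset.mem_filter] at hz ⊢; exact ⟨hz.1, by omega⟩

theorem cntLt_le_card (A : Finset ℕ) (x : ℕ) : cntLt A x ≤ A.card :=
  Finset.card_le_card (Finset.filter_subset _ _)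

/-- A block outside a lowerset `L` lies in a single gap of `L`: if a point of a block `W ∈ L`
separated two points of `V ∉ L`, non-crossingness would give `W ⊆ Conv(V)`, so `V ∈ L`. -/
theorem cntLt_eq_of_mem {P L : Finset (Finset ℕ)} (hP : GoodBlocks P) (hL : IsLowerset P L)
    {V : Finset ℕ} (hV : V ∈ P) (hVL : V ∉ L) {u v : ℕ} (hu : u ∈ V) (hv : v ∈ V) :
    cntLt (L.sup id) u = cntLt (L.sup id) v := by
  wlog huv : u < v generalizing u v
  · rcases Nat.lt_or_ge v u with h | h
    · exact (this hv hu h).symm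
    · rw [show u = v by omega]
  unfold cntLt
  congr 1
  ext s
  simp only [Finset.mem_filter, and_congr_right_iff]
  intro hs
  refine ⟨fun h => by omega, fun hsv => ?_⟩
  by_contra hsu
  obtain ⟨W, hW, hsW⟩ := mem_supp.1 hs
  have hWP := hL.1 hW
  have hne : V ≠ W := fun h => hVL (h ▸ hW)
  have hus : u ≠ s := fun h => hne (hP.2.1 V hV W hWP u hu (h ▸ hsW))
  apply hVL
  refine hL.2 W hW V hV fun w hw => ⟨⟨u, hu, ?_⟩, ⟨v, hv, ?_⟩⟩
  · by_contra hc
    exact hP.2.2 W hWP V hV hne.symm w hw s hsW u hu v hv ⟨by omega, by omega, by omega⟩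
  · by_contra hc
    exact hP.2.2 V hV W hWP hne u hu v hv s hsW w hw ⟨by omega, by omega, by omega⟩

theorem mem_gapBlocks_iff {P L : Finset (Finset ℕ)} (hP : GoodBlocks P) (hL : IsLowerset P L)
    {V : Finset ℕ} {x : ℕ} (hx : x ∈ V) {i : ℕ} :
    V ∈ gapBlocks P L i ↔ V ∈ P ∧ V ∉ L ∧ cntLt (L.sup id) x = i := by
  simp only [gapBlocks, Finset.mem_filter, Finset.mem_sdiff, and_assoc]
  constructor
  · rintro ⟨h1, h2, h3⟩
    exact ⟨h1, h2, h3 x hx⟩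
  · rintro ⟨h1, h2, h3⟩
    exact ⟨h1, h2, fun v hv => (cntLt_eq_of_mem hP hL h1 h2 hv hx).trans h3⟩

theorem biUnion_gapBlocks {P L : Finset (Finset ℕ)} (hP : GoodBlocks P) (hL : IsLowerset P L) :
    (Finset.range ((L.sup id).card + 1)).biUnion (gapBlocks P L) = P \ L := by
  ext V
  simp only [Finset.mem_biUnion, Finset.mem_range, Finset.mem_sdiff]
  constructor
  · rintro ⟨i, _, h⟩
    simp only [gapBlocks, Finset.mem_filter, Finset.mem_sdiff] at h
    exact h.1
  · rintro ⟨h1, h2⟩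
    obtain ⟨x, hx⟩ := hP.1 V h1
    exact ⟨cntLt (L.sup id) x, by have := cntLt_le_card (L.sup id) x; omega,
      (mem_gapBlocks_iff hP hL hx).2 ⟨h1, h2, rfl⟩⟩

/-- Blocks in different gaps are incomparable for the nesting order. -/
theorem gapBlocks_incomparable {P L : Finset (Finset ℕ)} (hP : GoodBlocks P) {i j : ℕ}
    (hij : i ≠ j) : ∀ V ∈ gapBlocks P L i, ∀ W ∈ gapBlocks P L j, ¬ SubConv V W := by
  intro V hV W hW h
  obtain ⟨x, hx⟩ := hP.1 V (gapBlocks_subset _ _ _ hV)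
  obtain ⟨⟨a, ha, hax⟩, ⟨b, hb, hxb⟩⟩ := h x hx
  have h1 := cntLt_mono (L.sup id) hax
  have h2 := cntLt_mono (L.sup id) hxb
  rw [(Finset.mem_filter.1 hW).2 a ha] at h1
  rw [(Finset.mem_filter.1 hW).2 b hb] at h2
  rw [(Finset.mem_filter.1 hV).2 x hx] at h1 h2
  omega

/-- Points of a gap: the ground set of `gapBlocks`. -/
theorem mem_supp_gapBlocks {P L : Finset (Finset ℕ)} (hP : GoodBlocks P) (hL : IsLowerset P L)
    {x i : ℕ} : x ∈ (gapBlocks P L i).sup id ↔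
      x ∈ P.sup id ∧ x ∉ L.sup id ∧ cntLt (L.sup id) x = i := by
  constructor
  · intro h
    obtain ⟨V, hV, hx⟩ := mem_supp.1 h
    obtain ⟨h1, h2, h3⟩ := (mem_gapBlocks_iff hP hL hx).1 hV
    refine ⟨mem_supp.2 ⟨V, h1, hx⟩, fun hc => ?_, h3⟩
    obtain ⟨W, hW, hxW⟩ := mem_supp.1 hc
    exact h2 (hP.2.1 V h1 W (hL.1 hW) x hx hxW ▸ hW)
  · rintro ⟨h1, h2, h3⟩
    obtain ⟨V, hV, hx⟩ := mem_supp.1 h1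
    exact mem_supp.2 ⟨V, (mem_gapBlocks_iff hP hL hx).2
      ⟨hV, fun h => h2 (mem_supp.2 ⟨V, h, hx⟩), h3⟩, hx⟩

/-! ### Relabelling -/

theorem relabel_eq (A V : Finset ℕ) : relabel A V = V.image (rk A) := rfl

theorem rk_le_iff {A : Finset ℕ} {x y : ℕ} (hy : y ∈ A) : rk A y ≤ rk A x ↔ y ≤ x := by
  constructor
  · intro h
    by_contra hc
    refine absurd h (not_le.2 (Finset.card_lt_card ?_))
    refine Finset.ssubset_iff_of_subset (fun z hz => ?_) |>.2 ⟨y, ?_, ?_⟩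
    · simp only [Finset.mem_filter] at hz ⊢; exact ⟨hz.1, by omega⟩
    · simp [hy]
    · simp only [Finset.mem_filter]; omega
  · intro h
    refine Finset.card_le_card fun z hz => ?_
    simp only [Finset.mem_filter] at hz ⊢; exact ⟨hz.1, by omega⟩

theorem rk_injOn (A : Finset ℕ) : Set.InjOn (rk A) A := fun _ hx _ hy h =>
  le_antisymm ((rk_le_iff hx).1 h.le) ((rk_le_iff hy).1 h.ge)

theorem relabel_inj {A V W : Finset ℕ} (hV : V ⊆ A) (hW : W ⊆ A) (h : relabel A V = relabel A W) :
    V = W := by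
  have key : ∀ V W : Finset ℕ, V ⊆ A → W ⊆ A → relabel A V = relabel A W → V ⊆ W := by
    intro V W hV hW h x hx
    have : rk A x ∈ relabel A W := h ▸ Finset.mem_image_of_mem _ hx
    obtain ⟨y, hy, hxy⟩ := Finset.mem_image.1 this
    exact rk_injOn A (hW hy) (hV hx) hxy ▸ hy
  exact (key V W hV hW h).antisymm (key W V hW hV h.symm)

theorem relabel_subset_iff {A V W : Finset ℕ} (hV : V ⊆ A) (hW : W ⊆ A) :
    relabel A V ⊆ relabel A W ↔ V ⊆ W := by
  refine ⟨fun h x hx => ?_, fun h => Finset.image_subset_image h⟩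
  obtain ⟨y, hy, hxy⟩ := Finset.mem_image.1 (h (Finset.mem_image_of_mem _ hx))
  exact rk_injOn A (hW hy) (hV hx) hxy ▸ hy

theorem subConv_relabel_iff {A V W : Finset ℕ} (hV : V ⊆ A) (hW : W ⊆ A) :
    SubConv (relabel A V) (relabel A W) ↔ SubConv V W := by
  simp only [SubConv, relabel_eq, Finset.forall_mem_image]
  simp only [InConv, Finset.mem_image, exists_exists_and_eq_and]
  refine forall₂_congr fun v hv => and_congr ?_ ?_
  · exact exists_congr fun a => and_congr_right fun ha => rk_le_iff (hW ha)
  · exact exists_congr fun a => and_congr_right fun ha => rk_le_iff (hV hv)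

theorem image_rk_self (A : Finset ℕ) : A.image (rk A) = Finset.Icc 1 A.card := by
  refine Finset.eq_of_subset_of_card_le (fun y hy => ?_) ?_
  · obtain ⟨x, hx, rfl⟩ := Finset.mem_image.1 hy
    refine Finset.mem_Icc.2 ⟨Finset.card_pos.2 ⟨x, ?_⟩, Finset.card_le_card (Finset.filter_subset _ _)⟩
    simp [hx]
  · rw [Finset.card_image_of_injOn (rk_injOn A)]; simp

/-- Ranks are transitive: relabelling by `A` first does not change the rank inside `B ⊆ A`. -/
theorem rk_image {A B : Finset ℕ} (hB : B ⊆ A) (x : ℕ) :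
    rk (B.image (rk A)) (rk A x) = rk B x := by
  rw [rk, rk, Finset.filter_image, Finset.card_image_of_injOn
    ((rk_injOn A).mono fun y hy => hB (Finset.mem_filter.1 hy).1)]
  congr 1
  refine Finset.filter_congr fun y hy => ?_
  exact rk_le_iff (hB hy)

theorem cntLt_image {A B : Finset ℕ} (hB : B ⊆ A) {x : ℕ} (hx : x ∈ A) :
    cntLt (B.image (rk A)) (rk A x) = cntLt B x := by
  rw [cntLt, cntLt, Finset.filter_image, Finset.card_image_of_injOn
    ((rk_injOn A).mono fun y hy => hB (Finset.mem_filter.1 hy).1)]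
  congr 1
  refine Finset.filter_congr fun y hy => ?_
  rw [← not_le, ← not_le, rk_le_iff hx]

theorem relabel_relabel {A B V : Finset ℕ} (hB : B ⊆ A) :
    relabel (B.image (rk A)) (relabel A V) = relabel B V := by
  simp only [relabel_eq, Finset.image_image]
  exact Finset.image_congr fun x _ => rk_image hB x

theorem supp_image_relabel (A : Finset ℕ) (L : Finset (Finset ℕ)) :
    (L.image (relabel A)).sup id = (L.sup id).image (rk A) := by
  ext x
  simp only [mem_supp, Finset.mem_image, relabel_eq]
  constructor
  · rintro ⟨_, ⟨V, hV, rfl⟩, hx⟩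
    obtain ⟨y, hy, rfl⟩ := Finset.mem_image.1 hx
    exact ⟨y, ⟨V, hV, hy⟩, rfl⟩
  · rintro ⟨y, ⟨V, hV, hy⟩, rfl⟩
    exact ⟨_, ⟨V, hV, rfl⟩, Finset.mem_image_of_mem _ hy⟩

theorem supp_standalone (P : Finset (Finset ℕ)) :
    (standalone P).sup id = Finset.Icc 1 (P.sup id).card := by
  rw [standalone, supp_image_relabel, image_rk_self]

theorem psize_standalone (P : Finset (Finset ℕ)) : psize (standalone P) = (P.sup id).card := by
  rw [psize, supp_standalone]
  refine le_antisymm (Finset.sup_le fun x hx => (Finset.mem_Icc.1 hx).2) ?_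
  rcases Nat.eq_zero_or_pos (P.sup id).card with h | h
  · omega
  · exact Finset.le_sup (f := id) (Finset.mem_Icc.2 ⟨h, le_rfl⟩)

theorem standalone_image {P L : Finset (Finset ℕ)} (hL : L ⊆ P) :
    standalone (L.image (relabel (P.sup id))) = standalone L := by
  unfold standalone
  rw [supp_image_relabel, Finset.image_image]
  exact Finset.image_congr fun V _ => relabel_relabel (supp_mono hL)

theorem relabel_injOn (P : Finset (Finset ℕ)) :
    Set.InjOn (relabel (P.sup id)) P := fun _ hV _ hW h =>
  relabel_inj (subset_supp hV) (subset_supp hW) h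

theorem mem_image_relabel_iff {P L : Finset (Finset ℕ)} (hL : L ⊆ P) {V : Finset ℕ} (hV : V ∈ P) :
    relabel (P.sup id) V ∈ L.image (relabel (P.sup id)) ↔ V ∈ L := by
  constructor
  · intro h
    obtain ⟨W, hW, e⟩ := Finset.mem_image.1 h
    exact relabel_injOn P (hL hW) hV e ▸ hW
  · exact Finset.mem_image_of_mem _

theorem image_relabel_injOn (P : Finset (Finset ℕ)) :
    Set.InjOn (fun L : Finset (Finset ℕ) => L.image (relabel (P.sup id))) (lowersets P) := by
  intro L hL M hM h
  replace h : L.image (relabel (P.sup id)) = M.image (relabel (P.sup id)) := h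
  have hL := (mem_lowersets.1 hL).1
  have hM := (mem_lowersets.1 hM).1
  ext V
  constructor
  · intro hV
    exact (mem_image_relabel_iff hM (hL hV)).1 (h ▸ Finset.mem_image_of_mem _ hV)
  · intro hV
    exact (mem_image_relabel_iff hL (hM hV)).1 (h ▸ Finset.mem_image_of_mem _ hV)

/-- Relabelling is an isomorphism for the nesting order, so it transports lowersets. -/
theorem lowersets_standalone (P : Finset (Finset ℕ)) :
    lowersets (standalone P) = (lowersets P).image fun L => L.image (relabel (P.sup id)) := by
  ext K
  simp only [mem_lowersets, Finset.mem_image]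
  constructor
  · rintro ⟨h1, h2⟩
    refine ⟨P.filter fun V => relabel (P.sup id) V ∈ K,
      ⟨Finset.filter_subset _ _, fun V hV W hW h => ?_⟩, ?_⟩
    · simp only [Finset.mem_filter] at hV ⊢
      exact ⟨hW, h2 _ hV.2 _ (Finset.mem_image_of_mem _ hW)
        ((subConv_relabel_iff (subset_supp hV.1) (subset_supp hW)).2 h)⟩
    · ext V
      simp only [Finset.mem_image, Finset.mem_filter]
      constructor
      · rintro ⟨W, ⟨_, h⟩, rfl⟩; exact h
      · intro hV
        obtain ⟨W, hW, rfl⟩ := Finset.mem_image.1 (h1 hV)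
        exact ⟨W, ⟨hW, hV⟩, rfl⟩
  · rintro ⟨L, ⟨h1, h2⟩, rfl⟩
    refine ⟨Finset.image_subset_image h1, ?_⟩
    simp only [standalone, Finset.forall_mem_image]
    intro V hV W hW h
    exact Finset.mem_image_of_mem _ (h2 V hV W hW
      ((subConv_relabel_iff (subset_supp (h1 hV)) (subset_supp hW)).1 h))

theorem gapSet_standalone {P L : Finset (Finset ℕ)} (hP : GoodBlocks P) (hL : IsLowerset P L)
    (i : ℕ) : gapSet (P.sup id).card ((L.sup id).image (rk (P.sup id))) i =
      ((gapBlocks P L i).sup id).image (rk (P.sup id)) := by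
  have hLP := supp_mono hL.1
  ext y
  simp only [gapSet, Finset.mem_filter, Finset.mem_sdiff, ← image_rk_self]
  constructor
  · rintro ⟨⟨h1, h2⟩, h3⟩
    obtain ⟨x, hx, rfl⟩ := Finset.mem_image.1 h1
    refine Finset.mem_image_of_mem _ ((mem_supp_gapBlocks hP hL).2 ⟨hx, fun h => h2
      (Finset.mem_image_of_mem _ h), ?_⟩)
    rw [← cntLt_image hLP hx]; exact h3
  · intro h
    obtain ⟨x, hx, rfl⟩ := Finset.mem_image.1 h
    obtain ⟨h1, h2, h3⟩ := (mem_supp_gapBlocks hP hL).1 hx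
    refine ⟨⟨Finset.mem_image_of_mem _ h1, fun h => h2 ?_⟩, ?_⟩
    · obtain ⟨z, hz, e⟩ := Finset.mem_image.1 h
      exact rk_injOn _ (hLP hz) h1 e ▸ hz
    · rw [← h3, ← cntLt_image hLP h1]; rfl

/-- The complementary upperset tuple is computed by the unrelabelled gaps. -/
theorem tupleOf_standalone {P L : Finset (Finset ℕ)} (hP : GoodBlocks P) (hL : IsLowerset P L) :
    tupleOf (standalone P) (L.image (relabel (P.sup id))) = tupleBlocks P L := by
  have hLP := supp_mono hL.1
  unfold tupleOf tupleBlocks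
  rw [supp_image_relabel, Finset.card_image_of_injOn ((rk_injOn _).mono hLP)]
  refine List.map_congr_left fun i _ => ?_
  have hG : (gapBlocks P L i).sup id ⊆ P.sup id := supp_mono (gapBlocks_subset P L i)
  rw [compUpper, psize_standalone, supp_image_relabel, gapSet_standalone hP hL]
  have : (standalone P \ L.image (relabel (P.sup id))).filter
      (fun V => V ⊆ ((gapBlocks P L i).sup id).image (rk (P.sup id))) =
      (gapBlocks P L i).image (relabel (P.sup id)) := by
    ext V
    simp only [Finset.mem_filter, Finset.mem_sdiff]
    constructor
    · rintro ⟨⟨h1, h2⟩, h3⟩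
      obtain ⟨W, hW, rfl⟩ := Finset.mem_image.1 h1
      have hWG : W ⊆ (gapBlocks P L i).sup id :=
        (relabel_subset_iff (subset_supp hW) hG).1 h3
      obtain ⟨x, hx⟩ := hP.1 W hW
      obtain ⟨_, h4, h5⟩ := (mem_supp_gapBlocks hP hL).1 (hWG hx)
      exact Finset.mem_image_of_mem _ ((mem_gapBlocks_iff hP hL hx).2
        ⟨hW, fun h => h4 (mem_supp.2 ⟨W, h, hx⟩), h5⟩)
    · intro h
      obtain ⟨W, hW, rfl⟩ := Finset.mem_image.1 h
      have hWP := gapBlocks_subset P L i hW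
      have hWL : W ∉ L := (Finset.mem_sdiff.1 (Finset.mem_filter.1 hW).1).2
      exact ⟨⟨Finset.mem_image_of_mem _ hWP, fun h => hWL ((mem_image_relabel_iff hL.1 hWP).1 h)⟩,
        Finset.image_subset_image (subset_supp hW)⟩
  rw [this, Finset.image_image]
  exact Finset.image_congr fun V _ => relabel_relabel hG

theorem validNC_good {π : Finset (Finset ℕ)} (h : ValidNC π) : GoodBlocks π :=
  ⟨h.1.1, fun B hB _ hC x hxB hxC =>
    (h.1.2.2 x (h.1.2.1 B hB x hxB)).unique ⟨hB, hxB⟩ ⟨hC, hxC⟩, h.2⟩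

theorem validNC_standalone {π : Finset (Finset ℕ)} (h : ValidNC π) : standalone π = π := by
  have hS : π.sup id = Finset.Icc 1 (psize π) := by
    ext x
    rw [mem_supp]
    constructor
    · rintro ⟨V, hV, hx⟩; exact h.1.2.1 V hV x hx
    · intro hx
      obtain ⟨V, hV, _⟩ := h.1.2.2 x hx
      exact ⟨V, hV⟩
  unfold standalone
  rw [hS]
  conv_rhs => rw [← Finset.image_id (s := π)]
  refine Finset.image_congr fun V hV => ?_
  rw [relabel_eq, id]
  conv_rhs => rw [← Finset.image_id (s := V)]
  refine Finset.image_congr fun x hx => ?_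
  have hx := Finset.mem_Icc.1 (h.1.2.1 V hV x hx)
  rw [rk, show (Finset.Icc 1 (psize π)).filter (· ≤ x) = Finset.Icc 1 x by
    ext y; simp only [Finset.mem_filter, Finset.mem_Icc]; omega]
  simp

/-! ### The distinguished block -/

theorem distBlock_eq {P : Finset (Finset ℕ)} (hP : GoodBlocks P) {V : Finset ℕ} (hV : V ∈ P)
    {x : ℕ} (hx : x ∈ V) (hmin : ∀ y ∈ P.sup id, x ≤ y) : distBlock P = V := by
  have : P.filter (fun V => ∃ x ∈ V, ∀ y ∈ P.sup id, x ≤ y) = {V} := by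
    ext W
    simp only [Finset.mem_filter, Finset.mem_singleton]
    constructor
    · rintro ⟨hW, z, hz, hzm⟩
      have : z = x := le_antisymm (hzm x (mem_supp.2 ⟨V, hV, hx⟩)) (hmin z (mem_supp.2 ⟨W, hW, hz⟩))
      exact hP.2.1 W hW V hV z hz (this ▸ hx)
    · rintro rfl
      exact ⟨hV, x, hx, hmin⟩
  rw [distBlock, this, Finset.sup_singleton, id]

theorem exists_distBlock {P : Finset (Finset ℕ)} (hP : GoodBlocks P) (hne : P ≠ ∅) :
    distBlock P ∈ P ∧ ∃ x ∈ distBlock P, ∀ y ∈ P.sup id, x ≤ y := by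
  obtain ⟨W, hW⟩ := Finset.nonempty_iff_ne_empty.2 hne
  obtain ⟨z, hz⟩ := hP.1 W hW
  have hne : (P.sup id).Nonempty := ⟨z, mem_supp.2 ⟨W, hW, hz⟩⟩
  obtain ⟨V, hV, hx⟩ := mem_supp.1 (Finset.min'_mem _ hne)
  have hmin : ∀ y ∈ P.sup id, (P.sup id).min' hne ≤ y := fun y hy => Finset.min'_le _ y hy
  rw [distBlock_eq hP hV hx hmin]
  exact ⟨hV, _, hx, hmin⟩

theorem distBlock_subset {P Q : Finset (Finset ℕ)} (hP : GoodBlocks P) (hQ : Q ⊆ P)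
    (h : distBlock P ∈ Q) : distBlock Q = distBlock P := by
  obtain ⟨_, x, hx, hm⟩ := exists_distBlock hP (Finset.nonempty_iff_ne_empty.1 ⟨_, hQ h⟩)
  exact distBlock_eq (hP.subset hQ) h hx fun y hy => hm y (supp_mono hQ hy)

/-- The distinguished block, when not in the lowerset `L`, lies in the gap before `L`. -/
theorem distBlock_mem_gap {P L : Finset (Finset ℕ)} (hP : GoodBlocks P) (hL : IsLowerset P L)
    (hne : P ≠ ∅) (h : distBlock P ∉ L) : distBlock P ∈ gapBlocks P L 0 := by
  obtain ⟨h1, x, hx, hm⟩ := exists_distBlock hP hne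
  refine (mem_gapBlocks_iff hP hL hx).2 ⟨h1, h, ?_⟩
  rw [cntLt, Finset.card_eq_zero, Finset.filter_eq_empty_iff]
  intro y hy
  have := hm y (supp_mono hL.1 hy)
  omega

theorem GoodBlocks.standalone {P : Finset (Finset ℕ)} (hP : GoodBlocks P) :
    GoodBlocks (standalone P) := by
  simp only [GoodBlocks, IsNoncrossing, _root_.standalone, Finset.forall_mem_image]
  refine ⟨fun B hB => (hP.1 B hB).image _, fun B hB C hC x hxB hxC => ?_, ?_⟩
  · obtain ⟨y, hy, rfl⟩ := Finset.mem_image.1 hxB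
    obtain ⟨z, hz, e⟩ := Finset.mem_image.1 hxC
    have := rk_injOn _ (subset_supp hC hz) (subset_supp hB hy) e
    rw [hP.2.1 B hB C hC y hy (this ▸ hz)]
  · intro B hB C hC hne
    simp only [relabel_eq, Finset.forall_mem_image]
    intro a ha b hb c hc d hd h
    have hlt : ∀ x y, x ∈ P.sup id → (rk (P.sup id) y < rk (P.sup id) x ↔ y < x) := by
      intro x y hx
      rw [← not_le, ← not_le, rk_le_iff hx]
    rw [hlt _ _ (subset_supp hC hc), hlt _ _ (subset_supp hB hb), hlt _ _ (subset_supp hC hd)] at h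
    exact hP.2.2 B hB C hC (fun e => hne (by rw [e])) a ha b hb c hc d hd h

theorem distBlock_standalone {P : Finset (Finset ℕ)} (hP : GoodBlocks P) (hne : P ≠ ∅) :
    distBlock (standalone P) = relabel (P.sup id) (distBlock P) := by
  obtain ⟨h1, x, hx, hm⟩ := exists_distBlock hP hne
  refine distBlock_eq hP.standalone (Finset.mem_image_of_mem _ h1) (Finset.mem_image_of_mem _ hx) ?_
  rw [standalone, supp_image_relabel]
  intro y hy
  obtain ⟨z, hz, rfl⟩ := Finset.mem_image.1 hy
  exact (rk_le_iff (subset_supp h1 hx)).2 (hm z hz)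

/-! ### Successive cuts as chains of lowersets -/

/-- Chains `L ⊆ L'` of lowersets of `P` are pairs of a lowerset `L` of `P` and a lowerset
`M = L' ∖ L` of the complement `P ∖ L`. -/
theorem sum_lowersets_chain {A : Type*} [AddCommMonoid A] (P : Finset (Finset ℕ))
    (f : Finset (Finset ℕ) → Finset (Finset ℕ) → A) :
    ∑ L' ∈ lowersets P, ∑ L ∈ lowersets L', f L L' =
      ∑ L ∈ lowersets P, ∑ M ∈ lowersets (P \ L), f L (L ∪ M) := by
  rw [Finset.sum_sigma', Finset.sum_sigma']
  refine Finset.sum_bij' (fun x _ => ⟨x.2, x.1 \ x.2⟩) (fun x _ => ⟨x.1 ∪ x.2, x.1⟩) ?_ ?_ ?_ ?_ ?_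
  · rintro ⟨L', L⟩ h
    simp only [Finset.mem_sigma, mem_lowersets] at h ⊢
    obtain ⟨h', h⟩ := h
    refine ⟨⟨h.1.trans h'.1, fun V hV W hW hVW => ?_⟩, Finset.sdiff_subset_sdiff h'.1 subset_rfl,
      fun V hV W hW hVW => ?_⟩
    · exact h.2 V hV W (h'.2 V (h.1 hV) W hW hVW) hVW
    · rw [Finset.mem_sdiff] at hV hW ⊢
      exact ⟨h'.2 V hV.1 W hW.1 hVW, hW.2⟩
  · rintro ⟨L, M⟩ h
    simp only [Finset.mem_sigma, mem_lowersets] at h ⊢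
    obtain ⟨h, h'⟩ := h
    refine ⟨⟨Finset.union_subset h.1 (h'.1.trans Finset.sdiff_subset), fun V hV W hW hVW => ?_⟩,
      Finset.subset_union_left, fun V hV W hW hVW => ?_⟩
    · rw [Finset.mem_union] at hV ⊢
      rcases hV with hV | hV
      · exact Or.inl (h.2 V hV W hW hVW)
      · by_cases hWL : W ∈ L
        · exact Or.inl hWL
        · exact Or.inr (h'.2 V hV W (Finset.mem_sdiff.2 ⟨hW, hWL⟩) hVW)
    · refine h.2 V hV W ?_ hVW
      rcases Finset.mem_union.1 hW with hW | hW
      · exact h.1 hW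
      · exact (Finset.mem_sdiff.1 (h'.1 hW)).1
  · rintro ⟨L', L⟩ h
    simp only [Finset.mem_sigma, mem_lowersets] at h
    simp [Finset.union_eq_right.2 h.2.1]
  · rintro ⟨L, M⟩ h
    simp only [Finset.mem_sigma, mem_lowersets] at h
    have hd : Disjoint L M := Finset.disjoint_left.2 fun V hV hM =>
      (Finset.mem_sdiff.1 (h.2.1 hM)).2 hV
    simp [Finset.union_sdiff_cancel_left hd]
  · rintro ⟨L', L⟩ h
    simp only [Finset.mem_sigma, mem_lowersets] at h
    simp [Finset.union_eq_right.2 h.2.1]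

/-- Lowersets of a union of mutually incomparable block sets are pairs of lowersets. -/
theorem sum_lowersets_union {A : Type*} [AddCommMonoid A] {Q R : Finset (Finset ℕ)}
    (h1 : ∀ V ∈ Q, ∀ W ∈ R, ¬ SubConv V W) (h2 : ∀ V ∈ R, ∀ W ∈ Q, ¬ SubConv V W)
    (f : Finset (Finset ℕ) → Finset (Finset ℕ) → A) :
    ∑ N ∈ lowersets (Q ∪ R), f (N ∩ Q) (N ∩ R) =
      ∑ M ∈ lowersets Q, ∑ N ∈ lowersets R, f M N := by
  have hd : ∀ V, V ∈ Q → V ∈ R → False := fun V hQ hR =>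
    h1 V hQ V hR (subConv_of_subset subset_rfl)
  rw [Finset.sum_sigma']
  refine Finset.sum_bij' (fun N _ => ⟨N ∩ Q, N ∩ R⟩) (fun x _ => x.1 ∪ x.2) ?_ ?_ ?_ ?_ ?_
  · intro N h
    simp only [Finset.mem_sigma, mem_lowersets] at h ⊢
    refine ⟨⟨Finset.inter_subset_right, fun V hV W hW hVW => ?_⟩,
      ⟨Finset.inter_subset_right, fun V hV W hW hVW => ?_⟩⟩
    · rw [Finset.mem_inter] at hV ⊢
      exact ⟨h.2 V hV.1 W (Finset.mem_union_left _ hW) hVW, hW⟩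
    · rw [Finset.mem_inter] at hV ⊢
      exact ⟨h.2 V hV.1 W (Finset.mem_union_right _ hW) hVW, hW⟩
  · rintro ⟨M, N⟩ h
    simp only [Finset.mem_sigma, mem_lowersets] at h ⊢
    refine ⟨Finset.union_subset_union h.1.1 h.2.1, fun V hV W hW hVW => ?_⟩
    rw [Finset.mem_union] at hV hW ⊢
    rcases hV with hV | hV <;> rcases hW with hW | hW
    · exact Or.inl (h.1.2 V hV W hW hVW)
    · exact absurd hVW (h1 V (h.1.1 hV) W hW)
    · exact absurd hVW (h2 V (h.2.1 hV) W hW)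
    · exact Or.inr (h.2.2 V hV W hW hVW)
  · intro N h
    rw [mem_lowersets] at h
    simp only [← Finset.inter_union_distrib_left]
    exact Finset.inter_eq_left.2 h.1
  · rintro ⟨M, N⟩ h
    simp only [Finset.mem_sigma, mem_lowersets] at h
    have e1 : (M ∪ N) ∩ Q = M := by
      ext V
      simp only [Finset.mem_inter, Finset.mem_union]
      exact ⟨fun hV => hV.1.resolve_right fun hN => hd V hV.2 (h.2.1 hN),
        fun hV => ⟨Or.inl hV, h.1.1 hV⟩⟩
    have e2 : (M ∪ N) ∩ R = N := by
      ext V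
      simp only [Finset.mem_inter, Finset.mem_union]
      exact ⟨fun hV => hV.1.resolve_left fun hM => hd V (h.1.1 hM) hV.2,
        fun hV => ⟨Or.inr hV, h.2.1 hV⟩⟩
    simp only [e1, e2]
  · intro N h
    rfl

/-! ### Gaps of gaps -/

/-- The number of gaps of `A ∪ B` lying before the `i`-th gap of `A`: the `i'`-th gap of `A`
contains as many gaps of `A ∪ B` as it has points of `B`, plus one. -/
def slotStart (A B : Finset ℕ) (i : ℕ) : ℕ :=
  ∑ l ∈ Finset.range i, ((B.filter fun x => cntLt A x = l).card + 1)

theorem slotStart_eq (A B : Finset ℕ) (i : ℕ) :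
    slotStart A B i = i + (B.filter fun x => cntLt A x < i).card := by
  induction i with
  | zero => simp [slotStart]
  | succ i ih =>
    rw [slotStart, Finset.sum_range_succ, ← slotStart, ih]
    have : B.filter (fun x => cntLt A x < i + 1) =
        B.filter (fun x => cntLt A x < i) ∪ B.filter (fun x => cntLt A x = i) := by
      ext x; simp only [Finset.mem_filter, Finset.mem_union]
      constructor
      · rintro ⟨h, h'⟩
        rcases Nat.lt_succ_iff_lt_or_eq.1 h' with h' | h'
        · exact Or.inl ⟨h, h'⟩
        · exact Or.inr ⟨h, h'⟩
      · rintro (⟨h, h'⟩ | ⟨h, h'⟩) <;> exact ⟨h, by omega⟩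
    rw [this, Finset.card_union_of_disjoint]
    · omega
    · refine Finset.disjoint_left.2 fun x hx hx' => ?_
      simp only [Finset.mem_filter] at hx hx'
      omega

theorem slotStart_succ (A B : Finset ℕ) (i : ℕ) :
    slotStart A B (i + 1) = slotStart A B i + ((B.filter fun x => cntLt A x = i).card + 1) :=
  Finset.sum_range_succ _ _

theorem slotStart_mono (A B : Finset ℕ) {i j : ℕ} (h : i ≤ j) : slotStart A B i ≤ slotStart A B j :=
  Finset.sum_le_sum_of_subset (Finset.range_mono h)

/-- The gap of `A ∪ B` containing `v`, from its gap in `A` and its gap among the points of `B` in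
that gap. -/
theorem cntLt_union {A B : Finset ℕ} (hd : Disjoint A B) (v : ℕ) :
    cntLt (A ∪ B) v = slotStart A B (cntLt A v) +
      cntLt (B.filter fun x => cntLt A x = cntLt A v) v := by
  rw [slotStart_eq, cntLt, Finset.filter_union, Finset.card_union_of_disjoint
    (Finset.disjoint_filter_filter hd), ← cntLt, add_assoc]
  congr 1
  have : B.filter (· < v) = B.filter (fun x => cntLt A x < cntLt A v) ∪
      (B.filter fun x => cntLt A x = cntLt A v).filter (· < v) := by
    ext x
    simp only [Finset.mem_filter, Finset.mem_union]
    constructor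
    · rintro ⟨h, h'⟩
      rcases (cntLt_mono A h'.le).lt_or_eq with h'' | h''
      · exact Or.inl ⟨h, h''⟩
      · exact Or.inr ⟨⟨h, h''⟩, h'⟩
    · rintro (⟨h, h'⟩ | ⟨⟨h, -⟩, h'⟩)
      · refine ⟨h, ?_⟩
        by_contra hc
        have := cntLt_mono A (not_lt.1 hc)
        omega
      · exact ⟨h, h'⟩
  rw [this, Finset.card_union_of_disjoint]
  · rfl
  · refine Finset.disjoint_left.2 fun x hx hx' => ?_
    simp only [Finset.mem_filter] at hx hx'
    omega

theorem slotStart_card {A B : Finset ℕ} (hd : Disjoint A B) :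
    slotStart A B (A.card + 1) = (A ∪ B).card + 1 := by
  rw [slotStart_eq, Finset.card_union_of_disjoint hd, Finset.filter_true_of_mem]
  · omega
  · intro x _
    have := cntLt_le_card A x
    omega

theorem flatMap_range {α : Type*} (n : ℕ) (m : ℕ → ℕ) (g : ℕ → ℕ → α) (h : ℕ → α)
    (H : ∀ i < n, ∀ j ≤ m i, g i j = h (∑ l ∈ Finset.range i, (m l + 1) + j)) :
    ((List.range n).flatMap fun i => (List.range (m i + 1)).map (g i)) =
      (List.range (∑ l ∈ Finset.range n, (m l + 1))).map h := by
  induction n with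
  | zero => simp
  | succ n ih =>
    rw [List.range_succ, List.flatMap_append, ih fun i hi => H i (by omega),
      Finset.sum_range_succ, List.range_add (n := ∑ l ∈ Finset.range n, (m l + 1)),
      List.map_append, List.map_map]
    congr 1
    simp only [List.flatMap_cons, List.flatMap_nil, List.append_nil]
    refine List.map_congr_left fun j hj => ?_
    exact H n (by omega) j (by have := List.mem_range.1 hj; omega)

/-- Cutting every gap of `L` along the part of `M` lying in it produces, read from left to right,
the upperset tuple of `L ∪ M`. -/
theorem tupleBlocks_union {P L M : Finset (Finset ℕ)} (hP : GoodBlocks P) (hL : IsLowerset P L)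
    (hM : IsLowerset (P \ L) M) :
    ((List.range ((L.sup id).card + 1)).flatMap fun i =>
      tupleBlocks (gapBlocks P L i) (M ∩ gapBlocks P L i)) = tupleBlocks P (L ∪ M) := by
  have hMP : ∀ V ∈ M, V ∈ P ∧ V ∉ L := fun V hV => Finset.mem_sdiff.1 (hM.1 hV)
  have hsupp : ∀ i, (M ∩ gapBlocks P L i).sup id =
      (M.sup id).filter fun x => cntLt (L.sup id) x = i := by
    intro i
    ext x
    simp only [mem_supp, Finset.mem_filter, Finset.mem_inter]
    constructor
    · rintro ⟨V, ⟨hV, hVg⟩, hx⟩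
      exact ⟨⟨V, hV, hx⟩, ((mem_gapBlocks_iff hP hL hx).1 hVg).2.2⟩
    · rintro ⟨⟨V, hV, hx⟩, h⟩
      exact ⟨V, ⟨hV, (mem_gapBlocks_iff hP hL hx).2 ⟨(hMP V hV).1, (hMP V hV).2, h⟩⟩, hx⟩
  have hd : Disjoint (L.sup id) (M.sup id) := by
    refine Finset.disjoint_left.2 fun x hx hx' => ?_
    obtain ⟨V, hV, hxV⟩ := mem_supp.1 hx
    obtain ⟨W, hW, hxW⟩ := mem_supp.1 hx'
    exact (hMP W hW).2 (hP.2.1 V (hL.1 hV) W (hMP W hW).1 x hxV hxW ▸ hV)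
  have hU : (L ∪ M).sup id = L.sup id ∪ M.sup id := by rw [Finset.sup_union]; rfl
  unfold tupleBlocks
  rw [flatMap_range _ (fun i => ((M ∩ gapBlocks P L i).sup id).card) _
    (fun i => standalone (gapBlocks P (L ∪ M) i)), hU]
  · simp only [hsupp]
    rw [← slotStart, slotStart_card hd]
  · intro i _ j hj
    simp only [hsupp] at hj ⊢
    rw [← slotStart]
    congr 1
    ext V
    have hmem : ∀ Q K : Finset (Finset ℕ), ∀ k, V ∈ gapBlocks Q K k ↔
        (V ∈ Q ∧ V ∉ K) ∧ ∀ v ∈ V, cntLt (K.sup id) v = k := by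
      intro Q K k; simp [gapBlocks]
    rw [hmem (gapBlocks P L i), hmem P (L ∪ M), hU, hsupp]
    simp only [Finset.mem_inter, Finset.mem_union, cntLt_union hd]
    constructor
    · rintro ⟨⟨hg, hVM⟩, h⟩
      obtain ⟨h1, h2⟩ := (hmem _ _ _).1 hg
      refine ⟨⟨h1.1, fun hc => hc.elim h1.2 fun hc => hVM ⟨hc, hg⟩⟩, fun v hv => ?_⟩
      rw [h2 v hv, h v hv]
    · rintro ⟨⟨h1, h2⟩, h⟩
      rw [not_or] at h2
      -- a gap index of `L ∪ M` determines the gap of `L` containing it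
      have hi : ∀ v ∈ V, cntLt (L.sup id) v = i := by
        intro v hv
        have e := h v hv
        have hc := cntLt_le_card ((M.sup id).filter
          fun x => cntLt (L.sup id) x = cntLt (L.sup id) v) v
        rcases lt_trichotomy (cntLt (L.sup id) v) i with hlt | heq | hlt
        · have := slotStart_mono (L.sup id) (M.sup id) (Nat.succ_le_of_lt hlt)
          rw [Nat.succ_eq_add_one, slotStart_succ] at this
          omega
        · exact heq
        · have := slotStart_mono (L.sup id) (M.sup id) (Nat.succ_le_of_lt hlt)
          rw [Nat.succ_eq_add_one, slotStart_succ] at this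
          omega
      refine ⟨⟨?_, fun hc => h2.2 hc.1⟩, fun v hv => ?_⟩
      · exact (hmem _ _ _).2 ⟨⟨h1, h2.1⟩, hi⟩
      · have e := h v hv
        rw [hi v hv] at e
        omega

theorem gapBlocks_union {P L M : Finset (Finset ℕ)} (hM : IsLowerset (P \ L) M) (i : ℕ) :
    gapBlocks (L ∪ M) L i = M ∩ gapBlocks P L i := by
  ext V
  simp only [gapBlocks, Finset.mem_filter, Finset.mem_sdiff, Finset.mem_inter, Finset.mem_union]
  constructor
  · rintro ⟨⟨h1, h2⟩, h3⟩
    have hVM := h1.resolve_left h2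
    exact ⟨hVM, Finset.mem_sdiff.1 (hM.1 hVM), h3⟩
  · rintro ⟨h1, ⟨_, h2⟩, h3⟩
    exact ⟨⟨Or.inr h1, h2⟩, h3⟩

/-! ### Multisets of cuts -/

/-- Concatenation product of two multisets of cuts. -/
def cutMul (X Y : Multiset (NCWord × NCWord)) : Multiset (NCWord × NCWord) :=
  X.bind fun a => Y.map fun b => (a.1 ++ b.1, a.2 ++ b.2)

/-- Concatenation product of two multisets of double cuts. -/
def dblMul (X Y : Multiset (NCWord × NCWord × NCWord)) : Multiset (NCWord × NCWord × NCWord) :=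
  X.bind fun a => Y.map fun b => (a.1 ++ b.1, a.2.1 ++ b.2.1, a.2.2 ++ b.2.2)

/-- Cut again, by the rule `G`, the lower parts of the cuts in `X`. -/
def recutLower (X : Multiset (NCWord × NCWord)) (G : NCWord → Multiset (NCWord × NCWord)) :
    Multiset (NCWord × NCWord × NCWord) :=
  X.bind fun ab => (G ab.1).map fun uv => (uv.1, uv.2, ab.2)

/-- Cut again, by the rule `G`, the upper parts of the cuts in `X`. -/
def recutUpper (X : Multiset (NCWord × NCWord)) (G : NCWord → Multiset (NCWord × NCWord)) :
    Multiset (NCWord × NCWord × NCWord) :=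
  X.bind fun ab => (G ab.2).map fun uv => (ab.1, uv.1, uv.2)

/-- The cuts of a partition `π` along the lowersets in `S`. -/
noncomputable def partCuts (π : Finset (Finset ℕ)) (S : Finset (Finset (Finset ℕ))) :
    Multiset (NCWord × NCWord) :=
  ∑ L ∈ S, {([standalone L], tupleOf π L)}

/-- The multiset of all cuts of a word. -/
noncomputable def wordCuts : NCWord → Multiset (NCWord × NCWord)
  | [] => {([], [])}
  | π :: w => cutMul (partCuts π (lowersets π)) (wordCuts w)

/-- The cuts of a word with distinguished block in the lower part. -/
noncomputable def wordCutsL : NCWord → Multiset (NCWord × NCWord)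
  | [] => 0
  | π :: w =>
    if π = ∅ then cutMul {([∅], [∅])} (wordCutsL w)
    else cutMul (partCuts π ((lowersets π).filter (fun L => distBlock π ∈ L))) (wordCuts w)

/-- The cuts of a word with distinguished block in the upper part. -/
noncomputable def wordCutsR : NCWord → Multiset (NCWord × NCWord)
  | [] => 0
  | π :: w =>
    if π = ∅ then cutMul {([∅], [∅])} (wordCutsR w)
    else cutMul (partCuts π ((lowersets π).filter (fun L => distBlock π ∉ L))) (wordCuts w)

theorem multiset_map_sum {ι α β : Type*} (s : Finset ι) (g : ι → Multiset α) (f : α → β) :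
    (∑ i ∈ s, g i).map f = ∑ i ∈ s, (g i).map f :=
  map_sum (Multiset.mapAddMonoidHom f) g s

theorem finsetSum_bind {ι α β : Type*} (s : Finset ι) (g : ι → Multiset α) (f : α → Multiset β) :
    (∑ i ∈ s, g i).bind f = ∑ i ∈ s, (g i).bind f := by
  induction s using Finset.induction_on with
  | empty => simp
  | insert a s ha ih => rw [Finset.sum_insert ha, Finset.sum_insert ha, Multiset.add_bind, ih]

theorem bind_finsetSum {ι α β : Type*} (s : Finset ι) (X : Multiset α)
    (g : ι → α → Multiset β) :
    X.bind (fun a => ∑ i ∈ s, g i a) = ∑ i ∈ s, X.bind (g i) := by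
  induction s using Finset.induction_on with
  | empty => simp
  | insert a s ha ih => simp only [Finset.sum_insert ha, Multiset.bind_add, ih]

theorem cutMul_one (X : Multiset (NCWord × NCWord)) : cutMul X {([], [])} = X := by
  simpa [cutMul] using Multiset.bind_singleton X id

theorem one_cutMul (X : Multiset (NCWord × NCWord)) : cutMul {([], [])} X = X := by
  simp [cutMul]

theorem cutMul_assoc (X Y Z : Multiset (NCWord × NCWord)) :
    cutMul (cutMul X Y) Z = cutMul X (cutMul Y Z) := by
  simp only [cutMul, Multiset.bind_assoc, Multiset.bind_map, Multiset.map_bind, Multiset.map_map,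
    Function.comp_def, List.append_assoc]

theorem cutMul_sum {ι κ : Type*} (s : Finset ι) (t : Finset κ) (a : ι → NCWord × NCWord)
    (b : κ → NCWord × NCWord) :
    cutMul (∑ i ∈ s, {a i}) (∑ j ∈ t, {b j}) =
      ∑ i ∈ s, ∑ j ∈ t, {((a i).1 ++ (b j).1, (a i).2 ++ (b j).2)} := by
  simp only [cutMul, finsetSum_bind, Multiset.singleton_bind, multiset_map_sum, Multiset.map_singleton]

theorem recutLower_sum {ι : Type*} (s : Finset ι) (a : ι → NCWord × NCWord)
    (G : NCWord → Multiset (NCWord × NCWord)) : recutLower (∑ i ∈ s, {a i}) G =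
      ∑ i ∈ s, (G (a i).1).map fun uv => (uv.1, uv.2, (a i).2) := by
  simp only [recutLower, finsetSum_bind, Multiset.singleton_bind]

theorem recutUpper_sum {ι : Type*} (s : Finset ι) (a : ι → NCWord × NCWord)
    (G : NCWord → Multiset (NCWord × NCWord)) : recutUpper (∑ i ∈ s, {a i}) G =
      ∑ i ∈ s, (G (a i).2).map fun uv => ((a i).1, uv.1, uv.2) := by
  simp only [recutUpper, finsetSum_bind, Multiset.singleton_bind]

theorem bind_swap_aux {α β γ δ ε : Type*} (X : Multiset α) (Y : Multiset β) (g : α → Multiset γ)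
    (h : β → Multiset δ) (f : α → β → γ → δ → ε) :
    (X.bind fun a => Y.bind fun b => (g a).bind fun c => (h b).map fun d => f a b c d) =
      X.bind fun a => (g a).bind fun c => Y.bind fun b => (h b).map fun d => f a b c d :=
  Multiset.bind_congr fun _ _ => Multiset.bind_bind _ _

/-- Cutting again the lower parts is multiplicative as soon as the rule `G` is, on the lower parts
that occur. -/
theorem recutLower_mul {X Y : Multiset (NCWord × NCWord)}
    {G G₁ G₂ : NCWord → Multiset (NCWord × NCWord)}
    (h : ∀ x ∈ X, ∀ y ∈ Y, G (x.1 ++ y.1) = cutMul (G₁ x.1) (G₂ y.1)) :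
    recutLower (cutMul X Y) G = dblMul (recutLower X G₁) (recutLower Y G₂) := by
  simp only [recutLower, cutMul, dblMul, Multiset.bind_assoc, Multiset.bind_map,
    Multiset.map_bind, Multiset.map_map, Function.comp_def]
  rw [← bind_swap_aux]
  refine Multiset.bind_congr fun x hx => Multiset.bind_congr fun y hy => ?_
  rw [h x hx y hy]
  simp only [cutMul, Multiset.map_bind, Multiset.map_map, Function.comp_def]

theorem recutUpper_mul {X Y : Multiset (NCWord × NCWord)}
    {G G₁ G₂ : NCWord → Multiset (NCWord × NCWord)}
    (h : ∀ x ∈ X, ∀ y ∈ Y, G (x.2 ++ y.2) = cutMul (G₁ x.2) (G₂ y.2)) :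
    recutUpper (cutMul X Y) G = dblMul (recutUpper X G₁) (recutUpper Y G₂) := by
  simp only [recutUpper, cutMul, dblMul, Multiset.bind_assoc, Multiset.bind_map,
    Multiset.map_bind, Multiset.map_map, Function.comp_def]
  rw [← bind_swap_aux]
  refine Multiset.bind_congr fun x hx => Multiset.bind_congr fun y hy => ?_
  rw [h x hx y hy]
  simp only [cutMul, Multiset.map_bind, Multiset.map_map, Function.comp_def]

theorem standalone_empty : standalone ∅ = ∅ := by simp [standalone]

theorem tupleOf_empty : tupleOf ∅ ∅ = [∅] := by
  simp [tupleOf, compUpper]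

theorem partCuts_empty : partCuts ∅ (lowersets ∅) = {([∅], [∅])} := by
  have : lowersets ∅ = {∅} := by
    ext L
    simp only [mem_lowersets, Finset.mem_singleton, IsLowerset, Finset.subset_empty]
    constructor
    · exact fun h => h.1
    · rintro rfl; simp
  rw [this, partCuts, Finset.sum_singleton, standalone_empty, tupleOf_empty]

theorem wordCuts_singleton (π : Finset (Finset ℕ)) :
    wordCuts [π] = partCuts π (lowersets π) := by
  rw [wordCuts, wordCuts, cutMul_one]

theorem wordCutsL_singleton {π : Finset (Finset ℕ)} (h : π ≠ ∅) :
    wordCutsL [π] = partCuts π ((lowersets π).filter (fun L => distBlock π ∈ L)) := by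
  rw [wordCutsL, wordCuts, cutMul_one, if_neg h]

theorem wordCutsR_singleton {π : Finset (Finset ℕ)} (h : π ≠ ∅) :
    wordCutsR [π] = partCuts π ((lowersets π).filter (fun L => distBlock π ∉ L)) := by
  rw [wordCutsR, wordCuts, cutMul_one, if_neg h]

theorem wordCuts_append (u v : NCWord) :
    wordCuts (u ++ v) = cutMul (wordCuts u) (wordCuts v) := by
  induction u with
  | nil => rw [List.nil_append, wordCuts, one_cutMul]
  | cons π u ih => rw [List.cons_append, wordCuts, wordCuts, ih, cutMul_assoc]

theorem wblocks_cons_empty (u : NCWord) : wblocks (∅ :: u) = wblocks u := by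
  simp [wblocks]

theorem wblocks_append (u v : NCWord) : wblocks (u ++ v) = wblocks u + wblocks v := by
  simp [wblocks]

theorem wblocks_cons_ne {π : Finset (Finset ℕ)} (h : π ≠ ∅) (u : NCWord) :
    wblocks (π :: u) ≠ 0 := by
  have := Finset.card_pos.2 (Finset.nonempty_iff_ne_empty.2 h)
  simp only [wblocks, List.map_cons, List.sum_cons]
  omega

/-- Once `u` has a block, the distinguished block of `u ++ v` is that of `u`. -/
theorem wordCutsL_append {u : NCWord} (hu : wblocks u ≠ 0) (v : NCWord) :
    wordCutsL (u ++ v) = cutMul (wordCutsL u) (wordCuts v) := by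
  induction u with
  | nil => simp [wblocks] at hu
  | cons π u ih =>
    rw [List.cons_append, wordCutsL, wordCutsL]
    split_ifs with h
    · subst h
      rw [ih (by rwa [wblocks_cons_empty] at hu), cutMul_assoc]
    · rw [wordCuts_append, cutMul_assoc]

theorem wordCutsR_append {u : NCWord} (hu : wblocks u ≠ 0) (v : NCWord) :
    wordCutsR (u ++ v) = cutMul (wordCutsR u) (wordCuts v) := by
  induction u with
  | nil => simp [wblocks] at hu
  | cons π u ih =>
    rw [List.cons_append, wordCutsR, wordCutsR]
    split_ifs with h
    · subst h
      rw [ih (by rwa [wblocks_cons_empty] at hu), cutMul_assoc]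
    · rw [wordCuts_append, cutMul_assoc]

/-- Words without blocks have only trivial cuts, so a nontrivial part of a cut of `u` makes `u`
nontrivial. -/
theorem wordCuts_trivial {u : NCWord} (hu : wblocks u = 0) :
    ∀ x ∈ wordCuts u, wblocks x.1 = 0 ∧ wblocks x.2 = 0 := by
  induction u with
  | nil => simp [wordCuts, wblocks]
  | cons π u ih =>
    by_cases h : π = ∅
    · subst h
      rw [wblocks_cons_empty] at hu
      intro x hx
      rw [wordCuts, partCuts_empty, cutMul, Multiset.singleton_bind, Multiset.mem_map] at hx
      obtain ⟨y, hy, rfl⟩ := hx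
      simpa only [List.singleton_append, wblocks_cons_empty] using ih hu y hy
    · exact absurd hu (wblocks_cons_ne h u)

/-! ### Cutting a single partition twice -/

theorem partCuts_standalone {P : Finset (Finset ℕ)} (hP : GoodBlocks P)
    {p q : Finset (Finset ℕ) → Prop} [DecidablePred p] [DecidablePred q]
    (hpq : ∀ L ∈ lowersets P, p (L.image (relabel (P.sup id))) ↔ q L) :
    partCuts (standalone P) ((lowersets (standalone P)).filter p) =
      ∑ L ∈ (lowersets P).filter q, {([standalone L], tupleBlocks P L)} := by
  rw [partCuts, Finset.sum_filter, Finset.sum_filter, lowersets_standalone,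
    Finset.sum_image (image_relabel_injOn P)]
  refine Finset.sum_congr rfl fun L hL => ?_
  have hL' := mem_lowersets.1 hL
  simp only [hpq L hL, standalone_image hL'.1, tupleOf_standalone hP hL']

theorem partCuts_standalone_all {P : Finset (Finset ℕ)} (hP : GoodBlocks P) :
    partCuts (standalone P) (lowersets (standalone P)) =
      ∑ L ∈ lowersets P, {([standalone L], tupleBlocks P L)} := by
  have := partCuts_standalone hP (p := fun _ => True) (q := fun _ => True) (by simp)
  simpa using this

theorem distBlock_standalone_mem {P : Finset (Finset ℕ)} (hP : GoodBlocks P) (hne : P ≠ ∅) :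
    ∀ L ∈ lowersets P, distBlock (standalone P) ∈ L.image (relabel (P.sup id)) ↔
      distBlock P ∈ L := by
  intro L hL
  rw [distBlock_standalone hP hne]
  exact mem_image_relabel_iff (mem_lowersets.1 hL).1 (exists_distBlock hP hne).1

theorem standalone_ne_empty {P : Finset (Finset ℕ)} (hne : P ≠ ∅) : standalone P ≠ ∅ := by
  simpa [standalone] using hne

theorem wordCutsL_standalone {P : Finset (Finset ℕ)} (hP : GoodBlocks P) (hne : P ≠ ∅) :
    wordCutsL [standalone P] = ∑ L ∈ (lowersets P).filter (fun L => distBlock P ∈ L),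
      {([standalone L], tupleBlocks P L)} := by
  rw [wordCutsL_singleton (standalone_ne_empty hne)]
  exact partCuts_standalone hP (p := fun L => distBlock (standalone P) ∈ L)
    (q := fun L => distBlock P ∈ L) (distBlock_standalone_mem hP hne)

theorem wordCutsR_standalone {P : Finset (Finset ℕ)} (hP : GoodBlocks P) (hne : P ≠ ∅) :
    wordCutsR [standalone P] = ∑ L ∈ (lowersets P).filter (fun L => distBlock P ∉ L),
      {([standalone L], tupleBlocks P L)} := by
  rw [wordCutsR_singleton (standalone_ne_empty hne)]
  exact partCuts_standalone hP (p := fun L => distBlock (standalone P) ∉ L)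
    (q := fun L => distBlock P ∉ L) fun L hL => not_congr (distBlock_standalone_mem hP hne L hL)

theorem wordCuts_standalone {P : Finset (Finset ℕ)} (hP : GoodBlocks P) :
    wordCuts [standalone P] = ∑ L ∈ lowersets P, {([standalone L], tupleBlocks P L)} := by
  rw [wordCuts_singleton, partCuts_standalone_all hP]

/-- Cuts of a word of mutually incomparable block sets are cuts of their union; `q` restricts the
cut of the first letter. -/
theorem wordCuts_incomparable (Q : ℕ → Finset (Finset ℕ)) (hQ : ∀ i, GoodBlocks (Q i))
    (hinc : ∀ i j, i ≠ j → ∀ V ∈ Q i, ∀ W ∈ Q j, ¬ SubConv V W)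
    (q : Finset (Finset ℕ) → Prop) [DecidablePred q] (k : ℕ) :
    cutMul (∑ N ∈ (lowersets (Q 0)).filter q, {([standalone N], tupleBlocks (Q 0) N)})
        (wordCuts ((List.range k).map fun i => standalone (Q (i + 1)))) =
      ∑ N ∈ (lowersets ((Finset.range (k + 1)).biUnion Q)).filter (fun N => q (N ∩ Q 0)),
        {((List.range (k + 1)).map (fun i => standalone (N ∩ Q i)),
          (List.range (k + 1)).flatMap fun i => tupleBlocks (Q i) (N ∩ Q i))} := by
  induction k with
  | zero =>
    simp only [List.range_zero, List.map_nil, wordCuts, cutMul_one, zero_add, List.range_one,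
      Finset.range_one, Finset.singleton_biUnion, List.map_cons, List.flatMap_cons,
      List.flatMap_nil, List.append_nil, Finset.sum_filter]
    refine Finset.sum_congr rfl fun N hN => ?_
    rw [Finset.inter_eq_left.2 (mem_lowersets.1 hN).1]
  | succ k ih =>
    have hU : (Finset.range (k + 1 + 1)).biUnion Q =
        (Finset.range (k + 1)).biUnion Q ∪ Q (k + 1) := by
      rw [Finset.range_add_one (n := k + 1), Finset.biUnion_insert, Finset.union_comm]
    have h1 : ∀ V ∈ (Finset.range (k + 1)).biUnion Q, ∀ W ∈ Q (k + 1), ¬ SubConv V W := by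
      intro V hV W hW
      obtain ⟨i, hi, hV⟩ := Finset.mem_biUnion.1 hV
      exact hinc i (k + 1) (by have := Finset.mem_range.1 hi; omega) V hV W hW
    have h2 : ∀ V ∈ Q (k + 1), ∀ W ∈ (Finset.range (k + 1)).biUnion Q, ¬ SubConv V W := by
      intro V hV W hW
      obtain ⟨i, hi, hW⟩ := Finset.mem_biUnion.1 hW
      exact hinc (k + 1) i (by have := Finset.mem_range.1 hi; omega) V hV W hW
    have hsub : ∀ (N : Finset (Finset ℕ)), ∀ i ∈ Finset.range (k + 1),
        N ∩ (Finset.range (k + 1)).biUnion Q ∩ Q i = N ∩ Q i := by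
      intro N i hi
      rw [Finset.inter_assoc, Finset.inter_eq_right.2 (Finset.subset_biUnion_of_mem Q hi)]
    rw [List.range_succ (n := k), List.map_append, wordCuts_append, ← cutMul_assoc, ih,
      List.map_singleton, wordCuts_standalone (hQ (k + 1)), cutMul_sum, Finset.sum_filter,
      Finset.sum_filter, hU]
    have key := sum_lowersets_union h1 h2 fun M N =>
      if q (M ∩ Q 0) then
        ({((List.range (k + 1)).map (fun i => standalone (M ∩ Q i)) ++ [standalone N],
          (List.range (k + 1)).flatMap (fun i => tupleBlocks (Q i) (M ∩ Q i)) ++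
            tupleBlocks (Q (k + 1)) N)} : Multiset (NCWord × NCWord)) else 0
    refine Eq.trans ?_ (key.symm.trans ?_)
    · refine Finset.sum_congr rfl fun M _ => ?_
      split_ifs <;> simp
    · refine Finset.sum_congr rfl fun N _ => ?_
      rw [hsub N 0 (by simp)]
      refine if_congr Iff.rfl ?_ rfl
      rw [List.range_succ (n := k + 1), List.map_append, List.flatMap_append, List.map_singleton,
        List.flatMap_singleton]
      congr 3
      · exact List.map_congr_left fun i hi => by
          rw [hsub N i (by simpa using hi)]
      · rw [List.flatMap_def, List.flatMap_def]
        congr 1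
        exact List.map_congr_left fun i hi => by
          rw [hsub N i (by simpa using hi)]

theorem tupleBlocks_cons (P L : Finset (Finset ℕ)) :
    tupleBlocks P L = standalone (gapBlocks P L 0) ::
      (List.range (L.sup id).card).map fun i => standalone (gapBlocks P L (i + 1)) := by
  rw [tupleBlocks, List.range_succ_eq_map]
  simp [Function.comp_def]

/-- Cutting the upperset tuple of `L` amounts to choosing a lowerset `M` of `P ∖ L`; `q` restricts the
cut of the first gap, the one which can hold the distinguished block. -/
theorem cuts_tupleBlocks {P L : Finset (Finset ℕ)} (hP : GoodBlocks P) (hL : IsLowerset P L)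
    (q : Finset (Finset ℕ) → Prop) [DecidablePred q] :
    cutMul (∑ N ∈ (lowersets (gapBlocks P L 0)).filter q,
        {([standalone N], tupleBlocks (gapBlocks P L 0) N)})
        (wordCuts ((List.range (L.sup id).card).map fun i => standalone (gapBlocks P L (i + 1)))) =
      ∑ M ∈ (lowersets (P \ L)).filter (fun M => q (M ∩ gapBlocks P L 0)),
        {(tupleBlocks (L ∪ M) L, tupleBlocks P (L ∪ M))} := by
  rw [wordCuts_incomparable (gapBlocks P L) (fun i => hP.subset (gapBlocks_subset P L i))
    (fun i j hij => gapBlocks_incomparable hP hij) q, biUnion_gapBlocks hP hL]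
  refine Finset.sum_congr rfl fun M hM => ?_
  have hM := mem_lowersets.1 (Finset.mem_filter.1 hM).1
  rw [tupleBlocks_union hP hL hM, tupleBlocks.eq_1 (L ∪ M) L]
  simp only [gapBlocks_union hM]

theorem wordCuts_tupleBlocks {P L : Finset (Finset ℕ)} (hP : GoodBlocks P) (hL : IsLowerset P L) :
    wordCuts (tupleBlocks P L) =
      ∑ M ∈ lowersets (P \ L), {(tupleBlocks (L ∪ M) L, tupleBlocks P (L ∪ M))} := by
  have := cuts_tupleBlocks hP hL fun _ => True
  rw [Finset.filter_true, Finset.filter_true] at this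
  rw [← this, tupleBlocks_cons, wordCuts,
    partCuts_standalone_all (hP.subset (gapBlocks_subset P L 0))]

theorem distBlock_gapBlocks {P L : Finset (Finset ℕ)} (hP : GoodBlocks P) (hL : IsLowerset P L)
    (hne : P ≠ ∅) (hd : distBlock P ∉ L) :
    gapBlocks P L 0 ≠ ∅ ∧ distBlock (gapBlocks P L 0) = distBlock P :=
  ⟨Finset.nonempty_iff_ne_empty.1 ⟨_, distBlock_mem_gap hP hL hne hd⟩,
    distBlock_subset hP (gapBlocks_subset P L 0) (distBlock_mem_gap hP hL hne hd)⟩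

theorem wordCutsL_tupleBlocks {P L : Finset (Finset ℕ)} (hP : GoodBlocks P) (hL : IsLowerset P L)
    (hne : P ≠ ∅) (hd : distBlock P ∉ L) :
    wordCutsL (tupleBlocks P L) =
      ∑ M ∈ (lowersets (P \ L)).filter (fun M => distBlock P ∈ M),
        {(tupleBlocks (L ∪ M) L, tupleBlocks P (L ∪ M))} := by
  obtain ⟨h1, h2⟩ := distBlock_gapBlocks hP hL hne hd
  have := cuts_tupleBlocks hP hL fun M => distBlock P ∈ M
  simp only [Finset.mem_inter, distBlock_mem_gap hP hL hne hd, and_true] at this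
  rw [← this, tupleBlocks_cons, ← List.singleton_append, wordCutsL_append
    (wblocks_cons_ne (standalone_ne_empty h1) _),
    wordCutsL_standalone (hP.subset (gapBlocks_subset P L 0)) h1, h2]

theorem wordCutsR_tupleBlocks {P L : Finset (Finset ℕ)} (hP : GoodBlocks P) (hL : IsLowerset P L)
    (hne : P ≠ ∅) (hd : distBlock P ∉ L) :
    wordCutsR (tupleBlocks P L) =
      ∑ M ∈ (lowersets (P \ L)).filter (fun M => distBlock P ∉ M),
        {(tupleBlocks (L ∪ M) L, tupleBlocks P (L ∪ M))} := by
  obtain ⟨h1, h2⟩ := distBlock_gapBlocks hP hL hne hd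
  have := cuts_tupleBlocks hP hL fun M => distBlock P ∉ M
  simp only [Finset.mem_inter, distBlock_mem_gap hP hL hne hd, and_true] at this
  rw [← this, tupleBlocks_cons, ← List.singleton_append, wordCutsR_append
    (wblocks_cons_ne (standalone_ne_empty h1) _),
    wordCutsR_standalone (hP.subset (gapBlocks_subset P L 0)) h1, h2]

/-- The double cut of `P` given by a chain `L ⊆ L'` of lowersets. -/
noncomputable def chainCut (P L L' : Finset (Finset ℕ)) : Multiset (NCWord × NCWord × NCWord) :=
  {([standalone L], tupleBlocks L' L, tupleBlocks P L')}

/-- Both sides are the sum of `chainCut P L L'` over all chains `L ⊆ L'` of lowersets of `P`. -/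
theorem recut_all {P : Finset (Finset ℕ)} (hP : GoodBlocks P) :
    recutLower (wordCuts [standalone P]) wordCuts =
      recutUpper (wordCuts [standalone P]) wordCuts := by
  rw [wordCuts_standalone hP, recutLower_sum, recutUpper_sum]
  refine Eq.trans ?_ ((sum_lowersets_chain P (chainCut P)).trans ?_)
  · refine Finset.sum_congr rfl fun L' hL' => ?_
    rw [wordCuts_standalone (hP.subset (mem_lowersets.1 hL').1), multiset_map_sum]
    rfl
  · refine Finset.sum_congr rfl fun L hL => ?_
    rw [wordCuts_tupleBlocks hP (mem_lowersets.1 hL), multiset_map_sum]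
    rfl

/-- Both sides are the sum over chains `L ⊆ L'` with the distinguished block in `L`. -/
theorem recut_LL {P : Finset (Finset ℕ)} (hP : GoodBlocks P) (hne : P ≠ ∅) :
    recutLower (wordCutsL [standalone P]) wordCutsL =
      recutUpper (wordCutsL [standalone P]) wordCuts := by
  rw [wordCutsL_standalone hP hne, recutLower_sum, recutUpper_sum, Finset.sum_filter,
    Finset.sum_filter]
  refine Eq.trans ?_ ((sum_lowersets_chain P fun L L' =>
    if distBlock P ∈ L then chainCut P L L' else 0).trans ?_)
  · refine Finset.sum_congr rfl fun L' hL' => ?_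
    split_ifs with hd
    · have hL'P := (mem_lowersets.1 hL').1
      rw [wordCutsL_standalone (hP.subset hL'P) (Finset.nonempty_iff_ne_empty.1 ⟨_, hd⟩),
        multiset_map_sum, distBlock_subset hP hL'P hd, Finset.sum_filter]
      rfl
    · refine (Finset.sum_eq_zero fun L hL => if_neg fun h => hd ?_).symm
      exact (mem_lowersets.1 hL).1 h
  · refine Finset.sum_congr rfl fun L hL => ?_
    split_ifs with hd
    · rw [wordCuts_tupleBlocks hP (mem_lowersets.1 hL), multiset_map_sum]
      rfl
    · simp

/-- Both sides are the sum over chains `L ⊆ L'` with the distinguished block in `L' ∖ L`. -/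
theorem recut_LR {P : Finset (Finset ℕ)} (hP : GoodBlocks P) (hne : P ≠ ∅) :
    recutLower (wordCutsL [standalone P]) wordCutsR =
      recutUpper (wordCutsR [standalone P]) wordCutsL := by
  rw [wordCutsL_standalone hP hne, wordCutsR_standalone hP hne, recutLower_sum, recutUpper_sum,
    Finset.sum_filter, Finset.sum_filter]
  refine Eq.trans ?_ ((sum_lowersets_chain P fun L L' =>
    if distBlock P ∈ L' ∧ distBlock P ∉ L then chainCut P L L' else 0).trans ?_)
  · refine Finset.sum_congr rfl fun L' hL' => ?_
    split_ifs with hd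
    · have hL'P := (mem_lowersets.1 hL').1
      rw [wordCutsR_standalone (hP.subset hL'P) (Finset.nonempty_iff_ne_empty.1 ⟨_, hd⟩),
        multiset_map_sum, distBlock_subset hP hL'P hd, Finset.sum_filter]
      simp only [hd, true_and]
      rfl
    · simp [hd]
  · refine Finset.sum_congr rfl fun L hL => ?_
    by_cases hd : distBlock P ∉ L
    · rw [if_pos hd, wordCutsL_tupleBlocks hP (mem_lowersets.1 hL) hne hd, multiset_map_sum,
        Finset.sum_filter]
      simp only [Finset.mem_union, hd, false_or, not_false_eq_true, and_true]
      rfl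
    · simp only [not_not] at hd
      simp [hd]

/-- Both sides are the sum over chains `L ⊆ L'` with the distinguished block outside `L'`. -/
theorem recut_RR {P : Finset (Finset ℕ)} (hP : GoodBlocks P) (hne : P ≠ ∅) :
    recutLower (wordCutsR [standalone P]) wordCuts =
      recutUpper (wordCutsR [standalone P]) wordCutsR := by
  rw [wordCutsR_standalone hP hne, recutLower_sum, recutUpper_sum,
    Finset.sum_filter, Finset.sum_filter]
  refine Eq.trans ?_ ((sum_lowersets_chain P fun L L' =>
    if distBlock P ∉ L' then chainCut P L L' else 0).trans ?_)
  · refine Finset.sum_congr rfl fun L' hL' => ?_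
    by_cases hd : distBlock P ∉ L'
    · simp only [if_pos hd]
      rw [wordCuts_standalone (hP.subset (mem_lowersets.1 hL').1), multiset_map_sum]
      rfl
    · simp [hd]
  · refine Finset.sum_congr rfl fun L hL => ?_
    by_cases hd : distBlock P ∉ L
    · rw [if_pos hd, wordCutsR_tupleBlocks hP (mem_lowersets.1 hL) hne hd, multiset_map_sum,
        Finset.sum_filter]
      simp only [Finset.mem_union, hd, false_or]
      rfl
    · rw [not_not] at hd
      simp [hd]

/-! ### Cutting a word twice -/

theorem mem_partCuts {π : Finset (Finset ℕ)} {S : Finset (Finset (Finset ℕ))}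
    {x : NCWord × NCWord} (h : x ∈ partCuts π S) :
    ∃ L ∈ S, x = ([standalone L], tupleOf π L) := by
  obtain ⟨L, hL, hx⟩ := Multiset.mem_sum.1 h
  exact ⟨L, hL, Multiset.mem_singleton.1 hx⟩

/-- The double cuts of a valid word, sorted by the position of the distinguished block; the
unrestricted identity is needed for the letters after the one holding that block. -/
theorem recut_word (w : NCWord) (hval : ∀ π ∈ w, ValidNC π) :
    recutLower (wordCuts w) wordCuts = recutUpper (wordCuts w) wordCuts ∧
    recutLower (wordCutsL w) wordCutsL = recutUpper (wordCutsL w) wordCuts ∧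
    recutLower (wordCutsL w) wordCutsR = recutUpper (wordCutsR w) wordCutsL ∧
    recutLower (wordCutsR w) wordCuts = recutUpper (wordCutsR w) wordCutsR := by
  induction w with
  | nil => simp [wordCuts, wordCutsL, wordCutsR, recutLower, recutUpper]
  | cons π w ih =>
    obtain ⟨i0, i1, i2, i3⟩ := ih fun ρ hρ => hval ρ (List.mem_cons_of_mem _ hρ)
    have hπ := hval π List.mem_cons_self
    have hP := validNC_good hπ
    have hst := validNC_standalone hπ
    have a0 := recut_all hP
    rw [hst] at a0
    have hC : wordCuts (π :: w) = cutMul (wordCuts [π]) (wordCuts w) :=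
      wordCuts_append [π] w
    have b0 : recutLower (wordCuts (π :: w)) wordCuts = recutUpper (wordCuts (π :: w)) wordCuts := by
      rw [hC, recutLower_mul fun _ _ _ _ => wordCuts_append _ _,
        recutUpper_mul fun _ _ _ _ => wordCuts_append _ _, i0, a0]
    refine ⟨b0, ?_⟩
    by_cases hne : π = ∅
    · subst hne
      -- an empty first letter is copied to both parts and does not move the distinguished block
      have e : ∀ F G : NCWord → Multiset (NCWord × NCWord),
          (∀ v, G (∅ :: v) = cutMul {([∅], [∅])} (G v)) → ∀ X,
          recutLower (cutMul {([∅], [∅])} X) G =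
            dblMul (recutLower {([∅], [∅])} fun _ => {([∅], [∅])}) (recutLower X G) ∧
          recutUpper (cutMul {([∅], [∅])} X) G =
            dblMul (recutLower {([∅], [∅])} fun _ => {([∅], [∅])}) (recutUpper X G) := by
        intro _ G hG X
        constructor
        · refine recutLower_mul fun x hx y _ => ?_
          rw [Multiset.mem_singleton.1 hx]
          exact hG _
        · rw [recutUpper_mul (G₁ := fun _ => {([∅], [∅])}) (G₂ := G) fun x hx y _ => ?_]
          · simp [recutLower, recutUpper]
          · rw [Multiset.mem_singleton.1 hx]
            exact hG _
      have eC : ∀ v, wordCuts (∅ :: v) = cutMul {([∅], [∅])} (wordCuts v) := fun v => by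
        rw [wordCuts, partCuts_empty]
      have eL : ∀ v, wordCutsL (∅ :: v) = cutMul {([∅], [∅])} (wordCutsL v) := fun v => by
        rw [wordCutsL, if_pos rfl]
      have eR : ∀ v, wordCutsR (∅ :: v) = cutMul {([∅], [∅])} (wordCutsR v) := fun v => by
        rw [wordCutsR, if_pos rfl]
      rw [eL, eR, (e wordCuts _ eL _).1, (e wordCuts _ eC _).2, (e wordCuts _ eR _).1,
        (e wordCuts _ eL _).2, (e wordCuts _ eC _).1, (e wordCuts _ eR _).2, i1, i2, i3]
      exact ⟨rfl, rfl, rfl⟩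
    · have a1 := recut_LL hP hne
      have a2 := recut_LR hP hne
      have a3 := recut_RR hP hne
      rw [hst] at a1 a2 a3
      have hw : wblocks [π] ≠ 0 := wblocks_cons_ne hne _
      have hCL : wordCutsL (π :: w) = cutMul (wordCutsL [π]) (wordCuts w) :=
        wordCutsL_append hw w
      have hCR : wordCutsR (π :: w) = cutMul (wordCutsR [π]) (wordCuts w) :=
        wordCutsR_append hw w
      -- a part holding the distinguished block is nontrivial, so it is cut before the other letters
      have hlow : ∀ x ∈ wordCutsL [π], wblocks x.1 ≠ 0 := by
        intro x hx
        rw [wordCutsL_singleton hne] at hx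
        obtain ⟨L, hL, rfl⟩ := mem_partCuts hx
        exact wblocks_cons_ne (standalone_ne_empty
          (Finset.nonempty_iff_ne_empty.1 ⟨_, (Finset.mem_filter.1 hL).2⟩)) _
      have hupp : ∀ x ∈ wordCutsR [π], wblocks x.2 ≠ 0 := by
        intro x hx
        rw [← hst, wordCutsR_standalone hP hne] at hx
        obtain ⟨L, hL, hx⟩ := Multiset.mem_sum.1 hx
        rw [Multiset.mem_singleton.1 hx, tupleBlocks_cons]
        obtain ⟨hL, hd⟩ := Finset.mem_filter.1 hL
        exact wblocks_cons_ne (standalone_ne_empty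
          (distBlock_gapBlocks hP (mem_lowersets.1 hL) hne hd).1) _
      rw [hCL, hCR]
      refine ⟨?_, ?_, ?_⟩
      · rw [recutLower_mul fun x hx y _ => wordCutsL_append (hlow x hx) y.1,
          recutUpper_mul fun _ _ _ _ => wordCuts_append _ _, i0, a1]
      · rw [recutLower_mul fun x hx y _ => wordCutsR_append (hlow x hx) y.1,
          recutUpper_mul fun x hx y _ => wordCutsL_append (hupp x hx) y.2, i0, a2]
      · rw [recutLower_mul fun _ _ _ _ => wordCuts_append _ _,
          recutUpper_mul fun x hx y _ => wordCutsR_append (hupp x hx) y.2, i0, a3]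

/-! ### Reduced cuts -/

/-- Discarding single cuts in both steps amounts to discarding double cuts, provided the condition
`p` on the first cut is implied by, or read off from, the resulting double cut. -/
theorem recutLower_filter {X : Multiset (NCWord × NCWord)}
    {G : NCWord → Multiset (NCWord × NCWord)} {p q : NCWord × NCWord → Prop}
    {r : NCWord × NCWord × NCWord → Prop} [DecidablePred p] [DecidablePred q] [DecidablePred r]
    (h : ∀ x ∈ X, ∀ y ∈ G x.1, (p x ∧ q y) ↔ r (y.1, y.2, x.2)) :
    recutLower (X.filter p) (fun w => (G w).filter q) = (recutLower X G).filter r := by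
  unfold recutLower
  rw [Multiset.filter_bind, Multiset.bind_filter]
  refine Multiset.bind_congr fun x hx => ?_
  rw [Multiset.filter_map]
  split_ifs with hp
  · exact congrArg _ (Multiset.filter_congr fun y hy => by
      simpa [hp] using h x hx y hy)
  · rw [eq_comm, Multiset.map_eq_zero, Multiset.filter_eq_nil]
    exact fun y hy hr => hp ((h x hx y hy).2 hr).1

theorem recutUpper_filter {X : Multiset (NCWord × NCWord)}
    {G : NCWord → Multiset (NCWord × NCWord)} {p q : NCWord × NCWord → Prop}
    {r : NCWord × NCWord × NCWord → Prop} [DecidablePred p] [DecidablePred q] [DecidablePred r]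
    (h : ∀ x ∈ X, ∀ y ∈ G x.2, (p x ∧ q y) ↔ r (x.1, y.1, y.2)) :
    recutUpper (X.filter p) (fun w => (G w).filter q) = (recutUpper X G).filter r := by
  unfold recutUpper
  rw [Multiset.filter_bind, Multiset.bind_filter]
  refine Multiset.bind_congr fun x hx => ?_
  rw [Multiset.filter_map]
  split_ifs with hp
  · exact congrArg _ (Multiset.filter_congr fun y hy => by
      simpa [hp] using h x hx y hy)
  · rw [eq_comm, Multiset.map_eq_zero, Multiset.filter_eq_nil]
    exact fun y hy hr => hp ((h x hx y hy).2 hr).1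

/-! ### Formal sums -/

/-- The formal sum of a multiset, as a finitely supported function. -/
noncomputable def formalSum {α : Type*} : Multiset α →+ (α →₀ ℂ) :=
  Multiset.sumAddMonoidHom.comp (Multiset.mapAddMonoidHom fun x => Finsupp.single x 1)

theorem formalSum_zero {α : Type*} : formalSum (0 : Multiset α) = 0 := map_zero _

theorem formalSum_cons {α : Type*} (a : α) (m : Multiset α) :
    formalSum (a ::ₘ m) = Finsupp.single a 1 + formalSum m := by
  simp [formalSum]

theorem formalSum_singleton {α : Type*} (a : α) :
    formalSum {a} = Finsupp.single a 1 := by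
  simp [formalSum]

theorem formalSum_filter {α : Type*} (p : α → Prop) [DecidablePred p] (m : Multiset α) :
    (formalSum m).filter p = formalSum (m.filter p) := by
  induction m using Multiset.induction_on with
  | empty =>
    rw [Multiset.filter_zero, formalSum_zero]
    exact Finsupp.filter_zero p
  | cons a m ih =>
    rw [formalSum_cons, Finsupp.filter_add, ih]
    by_cases h : p a
    · rw [Multiset.filter_cons_of_pos _ h, formalSum_cons, Finsupp.filter_single_of_pos _ h]
    · rw [Multiset.filter_cons_of_neg _ h, Finsupp.filter_single_of_neg _ h, zero_add]

/-- A linear extension evaluated on a formal sum, when each basis vector goes to a formal sum. -/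
theorem formalSum_sum {α β : Type*} (m : Multiset α) (F : α → ℂ → (β →₀ ℂ)) (g : α → Multiset β)
    (h0 : ∀ a, F a 0 = 0) (hadd : ∀ a c d, F a (c + d) = F a c + F a d)
    (h1 : ∀ a, F a 1 = formalSum (g a)) :
    (formalSum m).sum F = formalSum (m.bind g) := by
  induction m using Multiset.induction_on with
  | empty => simp
  | cons a m ih =>
    rw [formalSum_cons, Finsupp.sum_add_index' h0 hadd, ih, Finsupp.sum_single_index (h0 a), h1,
      Multiset.cons_bind, map_add]

theorem formalSum_sum_single {α β : Type*} (m : Multiset α) (g : α → β) :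
    ((formalSum m).sum fun a c => Finsupp.single (g a) c) = formalSum (m.map g) := by
  rw [formalSum_sum m _ (fun a => {g a}) (by simp) (by simp) (by simp [formalSum_singleton]),
    Multiset.bind_singleton]

theorem formalSum_partCuts (π : Finset (Finset ℕ)) (S : Finset (Finset (Finset ℕ)))
    (X : Multiset (NCWord × NCWord)) :
    (∑ L ∈ S, (formalSum X).sum fun ab c =>
      Finsupp.single (standalone L :: ab.1, tupleOf π L ++ ab.2) c) =
      formalSum (cutMul (partCuts π S) X) := by
  rw [cutMul, partCuts, finsetSum_bind, map_sum]
  refine Finset.sum_congr rfl fun L _ => ?_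
  rw [formalSum_sum_single, Multiset.singleton_bind]
  rfl

theorem fullCop_eq (w : NCWord) : fullCop w = formalSum (wordCuts w) := by
  induction w with
  | nil => rw [fullCop, wordCuts, formalSum_singleton]
  | cons π w ih => rw [fullCop, wordCuts, ih, formalSum_partCuts]

theorem fullCopL_eq (w : NCWord) : fullCopL w = formalSum (wordCutsL w) := by
  induction w with
  | nil => rw [fullCopL, wordCutsL, formalSum_zero]
  | cons π w ih =>
    rw [fullCopL, wordCutsL, ih, fullCop_eq, formalSum_partCuts, formalSum_sum_single]
    split_ifs
    · rw [cutMul, Multiset.singleton_bind]; rfl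
    · rfl

theorem fullCopR_eq (w : NCWord) : fullCopR w = formalSum (wordCutsR w) := by
  induction w with
  | nil => rw [fullCopR, wordCutsR, formalSum_zero]
  | cons π w ih =>
    rw [fullCopR, wordCutsR, ih, fullCop_eq, formalSum_partCuts, formalSum_sum_single]
    split_ifs
    · rw [cutMul, Multiset.singleton_bind]; rfl
    · rfl

theorem cutLower_eq {F G : NCWord → ((NCWord × NCWord) →₀ ℂ)}
    {F' G' : NCWord → Multiset (NCWord × NCWord)} (hF : ∀ w, F w = formalSum (F' w))
    (hG : ∀ w, G w = formalSum (G' w)) (w : NCWord) :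
    cutLower F G w = formalSum (recutLower (F' w) G') := by
  rw [cutLower, hF, recutLower]
  refine formalSum_sum _ _ _ (by simp) (fun a c d => ?_) fun a => ?_
  · simp only [add_mul, Finsupp.single_add, Finsupp.sum_add]
  · simp only [one_mul, hG, formalSum_sum_single]

theorem cutUpper_eq {F G : NCWord → ((NCWord × NCWord) →₀ ℂ)}
    {F' G' : NCWord → Multiset (NCWord × NCWord)} (hF : ∀ w, F w = formalSum (F' w))
    (hG : ∀ w, G w = formalSum (G' w)) (w : NCWord) :
    cutUpper F G w = formalSum (recutUpper (F' w) G') := by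
  rw [cutUpper, hF, recutUpper]
  refine formalSum_sum _ _ _ (by simp) (fun a c d => ?_) fun a => ?_
  · simp only [add_mul, Finsupp.single_add, Finsupp.sum_add]
  · simp only [one_mul, hG, formalSum_sum_single]

theorem redCop_eq (w : NCWord) : redCop w =
    formalSum ((wordCuts w).filter fun ab => wblocks ab.1 ≠ 0 ∧ wblocks ab.2 ≠ 0) := by
  rw [redCop, fullCop_eq, formalSum_filter]

theorem redCopL_eq (w : NCWord) : redCopL w =
    formalSum ((wordCutsL w).filter fun ab => wblocks ab.2 ≠ 0) := by
  rw [redCopL, fullCopL_eq, formalSum_filter]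

theorem redCopR_eq (w : NCWord) : redCopR w =
    formalSum ((wordCutsR w).filter fun ab => wblocks ab.1 ≠ 0) := by
  rw [redCopR, fullCopR_eq, formalSum_filter]

/-- **Statement 11.** Codendriform (unshuffle) relations for cuts of non-crossing
partitions: for every word `w` of non-crossing partitions containing at least one
block, the reduced half-coproducts `Δ_≺`, `Δ_≻` and `Δ = Δ_≺ + Δ_≻` satisfy
`(Δ_≺ ⊠ id) ∘ Δ_≺ = (id ⊠ Δ) ∘ Δ_≺`, `(Δ_≻ ⊠ id) ∘ Δ_≺ = (id ⊠ Δ_≺) ∘ Δ_≻` and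
`(Δ ⊠ id) ∘ Δ_≻ = (id ⊠ Δ_≻) ∘ Δ_≻`. -/
theorem unshuffle_relations_noncrossing (w : NCWord)
    (hval : ∀ π ∈ w, ValidNC π) (hblocks : wblocks w ≠ 0) :
    cutLower redCopL redCopL w = cutUpper redCopL redCop w ∧
    cutLower redCopL redCopR w = cutUpper redCopR redCopL w ∧
    cutLower redCopR redCop w = cutUpper redCopR redCopR w := by
  obtain ⟨-, h1, h2, h3⟩ := recut_word w hval
  rw [cutLower_eq redCopL_eq redCopL_eq, cutUpper_eq redCopL_eq redCop_eq,
    cutLower_eq redCopL_eq redCopR_eq, cutUpper_eq redCopR_eq redCopL_eq,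
    cutLower_eq redCopR_eq redCop_eq, cutUpper_eq redCopR_eq redCopR_eq]
  -- the part holding the distinguished block is nontrivial; the conditions left on a double cut
  -- `(L, M, U)` are that its two other parts are nontrivial
  refine ⟨congrArg _ ?_, congrArg _ ?_, congrArg _ ?_⟩
  · refine (recutLower_filter (r := fun t => wblocks t.2.1 ≠ 0 ∧ wblocks t.2.2 ≠ 0)
      fun _ _ _ _ => and_comm).trans (h1 ▸ (recutUpper_filter fun x _ y hy => ?_).symm)
    exact ⟨fun h => h.2, fun h => ⟨fun hx => h.1 (wordCuts_trivial hx y hy).1, h⟩⟩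
  · exact (recutLower_filter (r := fun t => wblocks t.1 ≠ 0 ∧ wblocks t.2.2 ≠ 0)
      fun _ _ _ _ => and_comm).trans (h2 ▸ (recutUpper_filter fun _ _ _ _ => Iff.rfl).symm)
  · refine (recutLower_filter (r := fun t => wblocks t.1 ≠ 0 ∧ wblocks t.2.1 ≠ 0)
      fun x _ y hy => ?_).trans (h3 ▸ (recutUpper_filter fun _ _ _ _ => Iff.rfl).symm)
    exact ⟨fun h => h.2, fun h => ⟨fun hx => h.1 (wordCuts_trivial hx y hy).1, h⟩⟩
end

section
/- Splitting bijection (the splitting map is an unshuffle morphism): fix n ≥ 1. Consider triples (S, α, (β₁,…,β_{j+1})) where S ⊆ [n] with |S| = j, α is a non-crossing partition of the ordered set S, and βᵢ is a non-crossing partition of the i-th maximal run of [n]∖S determined by S (before the first element of S, between consecutive elements, after the last). The map sending such a triple to the pair (π, L), where π is the partition of [n] whose blocks are the blocks of α together with the blocks of the βᵢ and L is the set of blocks coming from α, is well defined (π is non-crossing and L is a lowerset of π) and is a bijection onto the set of pairs (π, L) with π ∈ NC(n) and L a lowerset of π. Moreover 1 ∈ S if and only if the block of π containing 1 belongs to L.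 -/
open scoped Classical

/-- `α` is a partition of the finite subset `S ⊆ ℕ` into nonempty blocks. -/
def IsPartitionOfSet (S : Finset ℕ) (α : Finset (Finset ℕ)) : Prop :=
  (∀ B ∈ α, B.Nonempty) ∧ (∀ B ∈ α, B ⊆ S) ∧
    (∀ x ∈ S, ∃! B, B ∈ α ∧ x ∈ B)

/-! ### Gaps and ground sets -/

lemma mem_gapSet {n : ℕ} {S : Finset ℕ} {i x : ℕ} :
    x ∈ gapSet n S i ↔ x ∈ Finset.Icc 1 n ∧ x ∉ S ∧ (S.filter (· < x)).card = i := by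
  simp only [gapSet, Finset.mem_filter, Finset.mem_sdiff, and_assoc]

/-- The number of elements of `S` below a point, i.e. the index of its gap, is monotone. -/
lemma card_below_mono (S : Finset ℕ) {x y : ℕ} (h : x ≤ y) :
    (S.filter (· < x)).card ≤ (S.filter (· < y)).card := by
  apply Finset.card_le_card
  intro s hs
  rw [Finset.mem_filter] at hs ⊢
  exact ⟨hs.1, hs.2.trans_le h⟩

/-- No element of `S` lies between two points of the same gap. -/
lemma no_mem_between {n : ℕ} {S : Finset ℕ} {i x y s : ℕ} (hx : x ∈ gapSet n S i)
    (hy : y ∈ gapSet n S i) (hs : s ∈ S) (hxs : x ≤ s) (hsy : s ≤ y) : False := by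
  rw [mem_gapSet] at hx hy
  have hne : s ≠ y := fun h => hy.2.1 (h ▸ hs)
  have hlt : (S.filter (· < x)).card < (S.filter (· < y)).card := by
    apply Finset.card_lt_card
    rw [Finset.ssubset_iff_of_subset]
    · exact ⟨s, Finset.mem_filter.2 ⟨hs, by omega⟩, by simp [hxs]⟩
    · intro t ht
      rw [Finset.mem_filter] at ht ⊢
      exact ⟨ht.1, by omega⟩
  omega

/-- Points with different gap indices are separated by an element of `S`. -/
lemma exists_mem_between {S : Finset ℕ} {x y : ℕ}
    (h : (S.filter (· < x)).card < (S.filter (· < y)).card) : ∃ s ∈ S, x ≤ s ∧ s < y := by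
  by_contra! hcon
  refine absurd (Finset.card_le_card ?_) (not_le.2 h)
  intro s hs
  rw [Finset.mem_filter] at hs ⊢
  refine ⟨hs.1, ?_⟩
  by_contra hx
  have := hcon s hs.1 (not_lt.1 hx)
  omega

lemma IsPartitionOn.eq_of_mem {n : ℕ} {π : Finset (Finset ℕ)} (hπ : IsPartitionOn n π)
    {B C : Finset ℕ} (hB : B ∈ π) (hC : C ∈ π) {x : ℕ} (hxB : x ∈ B) (hxC : x ∈ C) : B = C :=
  (hπ.2.2 x (hπ.2.1 B hB x hxB)).unique ⟨hB, hxB⟩ ⟨hC, hxC⟩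

lemma IsNoncrossing.mono {π ρ : Finset (Finset ℕ)} (h : IsNoncrossing π) (hρ : ρ ⊆ π) :
    IsNoncrossing ρ :=
  fun B hB C hC => h B (hρ hB) C (hρ hC)

/-- The ground set is recovered as the union of the blocks. -/
lemma IsPartitionOfSet.sup_eq {S : Finset ℕ} {α : Finset (Finset ℕ)}
    (h : IsPartitionOfSet S α) : α.sup id = S := by
  ext x
  simp only [Finset.mem_sup, id]
  constructor
  · rintro ⟨B, hB, hx⟩
    exact h.2.1 B hB hx
  · intro hx
    obtain ⟨B, hB, -⟩ := h.2.2 x hx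
    exact ⟨B, hB⟩

/-! ### The partition assembled from a triple -/

section Triple

variable {n : ℕ} {S : Finset ℕ} {α : Finset (Finset ℕ)} {β : ℕ → Finset (Finset ℕ)}

lemma mem_assembled {B : Finset ℕ} :
    B ∈ α ∪ (Finset.range (S.card + 1)).biUnion β ↔ B ∈ α ∨ ∃ i ≤ S.card, B ∈ β i := by
  simp only [Finset.mem_union, Finset.mem_biUnion, Finset.mem_range, Nat.lt_succ_iff]

lemma assembled_isPartitionOn (hS : S ⊆ Finset.Icc 1 n) (hα : IsPartitionOfSet S α)
    (hβ : ∀ i ≤ S.card, IsPartitionOfSet (gapSet n S i) (β i)) :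
    IsPartitionOn n (α ∪ (Finset.range (S.card + 1)).biUnion β) := by
  refine ⟨?_, ?_, ?_⟩
  · intro B hB
    rcases mem_assembled.1 hB with hB | ⟨i, hi, hB⟩
    exacts [hα.1 B hB, (hβ i hi).1 B hB]
  · intro B hB x hx
    rcases mem_assembled.1 hB with hB | ⟨i, hi, hB⟩
    exacts [hS (hα.2.1 B hB hx), (mem_gapSet.1 ((hβ i hi).2.1 B hB hx)).1]
  · intro x hx
    by_cases hxS : x ∈ S
    · obtain ⟨B, ⟨hB, hxB⟩, huniq⟩ := hα.2.2 x hxS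
      refine ⟨B, ⟨mem_assembled.2 (.inl hB), hxB⟩, ?_⟩
      rintro C ⟨hC, hxC⟩
      rcases mem_assembled.1 hC with hC | ⟨i, hi, hC⟩
      · exact huniq C ⟨hC, hxC⟩
      · exact absurd hxS (mem_gapSet.1 ((hβ i hi).2.1 C hC hxC)).2.1
    · obtain ⟨B, ⟨hB, hxB⟩, huniq⟩ :=
        (hβ _ (Finset.card_filter_le S (· < x))).2.2 x (mem_gapSet.2 ⟨hx, hxS, rfl⟩)
      refine ⟨B, ⟨mem_assembled.2 (.inr ⟨_, Finset.card_filter_le _ _, hB⟩), hxB⟩, ?_⟩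
      rintro C ⟨hC, hxC⟩
      rcases mem_assembled.1 hC with hC | ⟨i, hi, hC⟩
      · exact absurd (hα.2.1 C hC hxC) hxS
      · have hxi := (mem_gapSet.1 ((hβ i hi).2.1 C hC hxC)).2.2
        subst hxi
        exact huniq C ⟨hC, hxC⟩

lemma assembled_isNoncrossing (hα : IsPartitionOfSet S α) (hαnc : IsNoncrossing α)
    (hβ : ∀ i ≤ S.card, IsPartitionOfSet (gapSet n S i) (β i) ∧ IsNoncrossing (β i)) :
    IsNoncrossing (α ∪ (Finset.range (S.card + 1)).biUnion β) := by
  rintro B hB C hC hBC a ha b hb c hc d hd ⟨hac, hcb, hbd⟩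
  rcases mem_assembled.1 hB with hB | ⟨i, hi, hB⟩ <;>
    rcases mem_assembled.1 hC with hC | ⟨j, hj, hC⟩
  · exact hαnc B hB C hC hBC a ha b hb c hc d hd ⟨hac, hcb, hbd⟩
  · have hsub := (hβ j hj).1.2.1 C hC
    exact no_mem_between (hsub hc) (hsub hd) (hα.2.1 B hB hb) hcb.le hbd.le
  · have hsub := (hβ i hi).1.2.1 B hB
    exact no_mem_between (hsub ha) (hsub hb) (hα.2.1 C hC hc) hac.le hcb.le
  · -- monotonicity of the gap index along `a < c < b` forces both blocks into one gap
    have hsubB := (hβ i hi).1.2.1 B hB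
    have hsubC := (hβ j hj).1.2.1 C hC
    have ha' := (mem_gapSet.1 (hsubB ha)).2.2
    have hb' := (mem_gapSet.1 (hsubB hb)).2.2
    have hc' := (mem_gapSet.1 (hsubC hc)).2.2
    have h₁ := card_below_mono S hac.le
    have h₂ := card_below_mono S hcb.le
    have hij : i = j := by omega
    subst hij
    exact (hβ i hi).2 B hB C hC hBC a ha b hb c hc d hd ⟨hac, hcb, hbd⟩

lemma assembled_isLowerset (hα : IsPartitionOfSet S α)
    (hβ : ∀ i ≤ S.card, IsPartitionOfSet (gapSet n S i) (β i)) :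
    IsLowerset (α ∪ (Finset.range (S.card + 1)).biUnion β) α := by
  refine ⟨Finset.subset_union_left, fun V hV W hW hVW => ?_⟩
  rcases mem_assembled.1 hW with hW | ⟨i, hi, hW⟩
  · exact hW
  · obtain ⟨v, hv⟩ := hα.1 V hV
    obtain ⟨⟨a, ha, hav⟩, ⟨b, hb, hvb⟩⟩ := hVW v hv
    have hsub := (hβ i hi).2.1 W hW
    exact (no_mem_between (hsub ha) (hsub hb) (hα.2.1 V hV hv) hav hvb).elim

/-- The gap partition `β i` consists of the blocks of `π ∖ α` contained in the `i`-th gap,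
where `π` is the assembled partition. -/
lemma gapPart_eq_filter (hα : IsPartitionOfSet S α)
    (hβ : ∀ i ≤ S.card, IsPartitionOfSet (gapSet n S i) (β i)) {i : ℕ} (hi : i ≤ S.card) :
    β i = ((α ∪ (Finset.range (S.card + 1)).biUnion β) \ α).filter
      (fun V => V ⊆ gapSet n S i) := by
  ext B
  rw [Finset.mem_filter, Finset.mem_sdiff, mem_assembled]
  constructor
  · intro hB
    have hsub := (hβ i hi).2.1 B hB
    refine ⟨⟨.inr ⟨i, hi, hB⟩, fun hBα => ?_⟩, hsub⟩
    obtain ⟨x, hx⟩ := (hβ i hi).1 B hB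
    exact (mem_gapSet.1 (hsub hx)).2.1 (hα.2.1 B hBα hx)
  · rintro ⟨⟨hB | ⟨j, hj, hB⟩, hBα⟩, hsub⟩
    · exact absurd hB hBα
    · obtain ⟨x, hx⟩ := (hβ j hj).1 B hB
      have h₁ := (mem_gapSet.1 (hsub hx)).2.2
      have h₂ := (mem_gapSet.1 ((hβ j hj).2.1 B hB hx)).2.2
      have hij : i = j := h₁.symm.trans h₂
      rwa [hij]

end Triple

/-! ### The triple extracted from a lowerset -/

section Lowerset

variable {n : ℕ} {π L : Finset (Finset ℕ)}

lemma disjoint_sup_of_notMem (hπ : IsPartitionOn n π) (hL : L ⊆ π) {V : Finset ℕ}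
    (hV : V ∈ π) (hVL : V ∉ L) {x : ℕ} (hx : x ∈ V) : x ∉ L.sup id := by
  simp only [Finset.mem_sup, id, not_exists, not_and]
  intro W hW hxW
  exact hVL (hπ.eq_of_mem (hL hW) hV hxW hx ▸ hW)

/-- A block outside the lowerset has no point of `⋃ L` between two of its points: the block
`W ∈ L` through such a point would be nested in `V`. -/
lemma not_between_of_notMem (hπ : IsPartitionOn n π) (hnc : IsNoncrossing π)
    (hL : IsLowerset π L) {V : Finset ℕ} (hV : V ∈ π) (hVL : V ∉ L) {x y s : ℕ}
    (hx : x ∈ V) (hy : y ∈ V) (hs : s ∈ L.sup id) (hxs : x ≤ s) (hsy : s ≤ y) : False := by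
  have hsV : s ∉ V := fun h => disjoint_sup_of_notMem hπ hL.1 hV hVL h hs
  have hxs' : x < s := lt_of_le_of_ne hxs fun h => hsV (h ▸ hx)
  have hsy' : s < y := lt_of_le_of_ne hsy fun h => hsV (h ▸ hy)
  obtain ⟨W, hW, hsW⟩ := Finset.mem_sup.1 hs
  have hne : W ≠ V := fun h => hVL (h ▸ hW)
  refine hVL (hL.2 W hW V hV fun w hw => ⟨?_, ?_⟩)
  · by_contra! hcon
    exact hnc W (hL.1 hW) V hV hne w hw s hsW x hx y hy ⟨hcon x hx, hxs', hsy'⟩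
  · by_contra! hcon
    exact hnc V hV W (hL.1 hW) hne.symm x hx y hy s hsW w hw ⟨hxs', hsy', hcon y hy⟩

/-- A block outside the lowerset is contained in the gap of `⋃ L` of any of its points. -/
lemma subset_gapSet_of_notMem (hπ : IsPartitionOn n π) (hnc : IsNoncrossing π)
    (hL : IsLowerset π L) {V : Finset ℕ} (hV : V ∈ π) (hVL : V ∉ L) {x : ℕ} (hx : x ∈ V) :
    V ⊆ gapSet n (L.sup id) ((L.sup id).filter (· < x)).card := by
  intro y hy
  refine mem_gapSet.2 ⟨hπ.2.1 V hV y hy, disjoint_sup_of_notMem hπ hL.1 hV hVL hy, ?_⟩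
  rcases lt_trichotomy ((L.sup id).filter (· < y)).card ((L.sup id).filter (· < x)).card
    with h | h | h
  · obtain ⟨s, hs, h₁, h₂⟩ := exists_mem_between h
    exact (not_between_of_notMem hπ hnc hL hV hVL hy hx hs h₁ h₂.le).elim
  · exact h
  · obtain ⟨s, hs, h₁, h₂⟩ := exists_mem_between h
    exact (not_between_of_notMem hπ hnc hL hV hVL hx hy hs h₁ h₂.le).elim

lemma lowerset_isPartitionOfSet (hπ : IsPartitionOn n π) (hL : L ⊆ π) :
    IsPartitionOfSet (L.sup id) L := by
  refine ⟨fun B hB => hπ.1 B (hL hB), fun B hB => Finset.le_sup (f := id) hB, ?_⟩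
  intro x hx
  obtain ⟨B, hB, hxB⟩ := Finset.mem_sup.1 hx
  exact ⟨B, ⟨hB, hxB⟩, fun C hC => hπ.eq_of_mem (hL hC.1) (hL hB) hC.2 hxB⟩

lemma filter_isPartitionOfSet (hπ : IsPartitionOn n π) (hnc : IsNoncrossing π)
    (hL : IsLowerset π L) (i : ℕ) :
    IsPartitionOfSet (gapSet n (L.sup id) i)
      ((π \ L).filter fun V => V ⊆ gapSet n (L.sup id) i) := by
  simp only [IsPartitionOfSet, Finset.mem_filter, Finset.mem_sdiff]
  refine ⟨fun B hB => hπ.1 B hB.1.1, fun B hB => hB.2, ?_⟩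
  intro x hx
  obtain ⟨hxn, hxS, hxi⟩ := mem_gapSet.1 hx
  obtain ⟨B, ⟨hB, hxB⟩, huniq⟩ := hπ.2.2 x hxn
  have hBL : B ∉ L := fun h => hxS (Finset.mem_sup.2 ⟨B, h, hxB⟩)
  have hsub := subset_gapSet_of_notMem hπ hnc hL hB hBL hxB
  rw [hxi] at hsub
  exact ⟨B, ⟨⟨⟨hB, hBL⟩, hsub⟩, hxB⟩, fun C hC => huniq C ⟨hC.1.1.1, hC.2⟩⟩

lemma assembled_filter_eq (hπ : IsPartitionOn n π) (hnc : IsNoncrossing π)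
    (hL : IsLowerset π L) :
    L ∪ (Finset.range ((L.sup id).card + 1)).biUnion
      (fun i => (π \ L).filter fun V => V ⊆ gapSet n (L.sup id) i) = π := by
  ext B
  rw [mem_assembled]
  simp only [Finset.mem_filter, Finset.mem_sdiff]
  constructor
  · rintro (hB | ⟨i, -, hB⟩)
    exacts [hL.1 hB, hB.1.1]
  · intro hB
    by_cases hBL : B ∈ L
    · exact .inl hBL
    · obtain ⟨x, hx⟩ := hπ.1 B hB
      exact .inr ⟨_, Finset.card_filter_le _ _, ⟨hB, hBL⟩,
        subset_gapSet_of_notMem hπ hnc hL hB hBL hx⟩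

end Lowerset

/-- **Statement 13.** Splitting bijection: for `n ≥ 1`, the assignment
`(S, α, (β₀,…,β_{|S|})) ↦ (π, L)` — where `S ⊆ [n]`, `α` is a non-crossing partition of
`S`, `βᵢ` is a non-crossing partition of the `i`-th maximal run of `[n] ∖ S`,
`π = α ∪ ⋃ᵢ βᵢ` and `L = α` — is well defined (`π` is a non-crossing partition of `[n]`
and `L` is a lowerset of `π`) and is a bijection onto the set of pairs `(π, L)` with
`π ∈ NC(n)` and `L` a lowerset of `π`; moreover `1 ∈ S` iff the block of `π`
containing `1` belongs to `L`. -/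
theorem splitting_bijection (n : ℕ) (hn : 1 ≤ n) :
    -- well-definedness, and the condition on the element 1
    (∀ (S : Finset ℕ) (α : Finset (Finset ℕ)) (β : ℕ → Finset (Finset ℕ)),
      S ⊆ Finset.Icc 1 n → IsPartitionOfSet S α → IsNoncrossing α →
      (∀ i ≤ S.card, IsPartitionOfSet (gapSet n S i) (β i) ∧ IsNoncrossing (β i)) →
      (IsPartitionOn n (α ∪ (Finset.range (S.card + 1)).biUnion β) ∧
        IsNoncrossing (α ∪ (Finset.range (S.card + 1)).biUnion β) ∧
        IsLowerset (α ∪ (Finset.range (S.card + 1)).biUnion β) α) ∧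
      (1 ∈ S ↔ ∃ V ∈ α, 1 ∈ V)) ∧
    -- bijectivity: every pair (π, L) comes from exactly one triple (S, α, β)
    (∀ (π : Finset (Finset ℕ)), IsPartitionOn n π → IsNoncrossing π →
      ∀ L, IsLowerset π L →
        ∃ (S : Finset ℕ) (α : Finset (Finset ℕ)) (β : ℕ → Finset (Finset ℕ)),
          (S ⊆ Finset.Icc 1 n ∧ IsPartitionOfSet S α ∧ IsNoncrossing α ∧
            (∀ i ≤ S.card,
              IsPartitionOfSet (gapSet n S i) (β i) ∧ IsNoncrossing (β i)) ∧
            α ∪ (Finset.range (S.card + 1)).biUnion β = π ∧ α = L) ∧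
          (∀ (S' : Finset ℕ) (α' : Finset (Finset ℕ)) (β' : ℕ → Finset (Finset ℕ)),
            S' ⊆ Finset.Icc 1 n → IsPartitionOfSet S' α' → IsNoncrossing α' →
            (∀ i ≤ S'.card,
              IsPartitionOfSet (gapSet n S' i) (β' i) ∧ IsNoncrossing (β' i)) →
            α' ∪ (Finset.range (S'.card + 1)).biUnion β' = π → α' = L →
            S' = S ∧ α' = α ∧ ∀ i ≤ S.card, β' i = β i)) := by
  refine ⟨fun S α β hS hα hαnc hβ => ⟨⟨?_, ?_, ?_⟩, ?_⟩, fun π hπ hnc L hL => ?_⟩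
  · exact assembled_isPartitionOn hS hα fun i hi => (hβ i hi).1
  · exact assembled_isNoncrossing hα hαnc hβ
  · exact assembled_isLowerset hα fun i hi => (hβ i hi).1
  · rw [← hα.sup_eq, Finset.mem_sup]
    rfl
  · refine ⟨L.sup id, L, fun i => (π \ L).filter fun V => V ⊆ gapSet n (L.sup id) i,
      ⟨?_, lowerset_isPartitionOfSet hπ hL.1, hnc.mono hL.1, fun i _ =>
        ⟨filter_isPartitionOfSet hπ hnc hL i,
          hnc.mono ((Finset.filter_subset _ _).trans Finset.sdiff_subset)⟩,
        assembled_filter_eq hπ hnc hL, rfl⟩, ?_⟩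
    · intro x hx
      obtain ⟨B, hB, hxB⟩ := Finset.mem_sup.1 hx
      exact hπ.2.1 B (hL.1 hB) x hxB
    · rintro S' α' β' - hα' - hβ' hunion rfl
      obtain rfl := hα'.sup_eq
      refine ⟨rfl, rfl, fun i hi => ?_⟩
      have h := gapPart_eq_filter hα' (fun i hi => (hβ' i hi).1) hi
      rwa [hunion] at h
end

section
/- Counting monotone labellings of a forest: let P be a finite partially ordered set with n elements such that for every x ∈ P the set {y ∈ P : y > x} is totally ordered (so that the Hasse diagram of P is a forest with the maximal elements as roots). Then the number of order-preserving bijections ℓ : P → {1,…,n} (i.e., x < y implies ℓ(x) < ℓ(y)) equals n! / ∏_{x ∈ P} |{y ∈ P : y ≤ x}|. In particular, the number of monotone labellings of a non-crossing partition π (labellings of its blocks increasing from nested blocks to englobing blocks) is #π!/τ(π)!, where #π is the number of blocks and τ(π)! = ∏_{V block of π} #{W block of π : W = V or W ⊆ Conv(V)} is the tree factorial of its nesting forest. -/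
open scoped Classical

/-- The tree factorial of the nesting forest of a non-crossing partition:
`τ(π)! = ∏_{V ∈ π} #{W ∈ π : W = V or W ⊆ Conv(V)}`. -/
noncomputable def treeFact (π : Finset (Finset ℕ)) : ℕ :=
  ∏ V ∈ π, (π.filter fun W => W = V ∨ SubConv W V).card

/-! ### Counting increasing labellings of a forest -/

/-- The increasing labellings of a poset `P` by `Fin n`: bijections `ℓ : P ≃ Fin n` with
`ℓ x < ℓ y` whenever `x < y`. There are none unless `P` has `n` elements. -/
abbrev IncLabelling (P : Type) [PartialOrder P] (n : ℕ) : Type :=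
  {ℓ : P ≃ Fin n // ∀ x y : P, x < y → ℓ x < ℓ y}

/-- Sorting the increasing labellings by the element carrying the largest label. -/
lemma card_incLabelling_eq_sum (P : Type) [Fintype P] [PartialOrder P] (n : ℕ) :
    Nat.card (IncLabelling P (n + 1)) =
      ∑ r : P, Nat.card {ℓ : IncLabelling P (n + 1) // ℓ.1.symm (Fin.last n) = r} := by
  rw [← Nat.card_sigma]
  exact Nat.card_congr
    (Equiv.sigmaFiberEquiv fun ℓ : IncLabelling P (n + 1) => ℓ.1.symm (Fin.last n)).symm

/-- The largest label can only sit on a maximal element. -/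
lemma card_fiber_of_not_isMax (P : Type) [PartialOrder P] (n : ℕ) {r : P} (hr : ¬ IsMax r) :
    Nat.card {ℓ : IncLabelling P (n + 1) // ℓ.1.symm (Fin.last n) = r} = 0 := by
  rw [Nat.card_eq_zero]
  left
  refine ⟨fun ⟨ℓ, h⟩ => ?_⟩
  obtain ⟨y, hy⟩ := not_isMax_iff.1 hr
  have h1 := ℓ.2 r y hy
  rw [← h, Equiv.apply_symm_apply] at h1
  exact absurd (Fin.le_last _) (not_le.2 h1)

/-- Deleting a maximal element `r` that carries the largest label is a bijection onto the
increasing labellings of the remaining poset; the inverse puts the largest label back on `r`,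
which keeps the labelling increasing because nothing lies above `r`. -/
lemma card_fiber_of_isMax (P : Type) [PartialOrder P] (n : ℕ) {r : P} (hr : IsMax r) :
    Nat.card {ℓ : IncLabelling P (n + 1) // ℓ.1.symm (Fin.last n) = r} =
      Nat.card (IncLabelling {x : P // x ≠ r} n) := by
  have key : ∀ ℓ : IncLabelling P (n + 1), ℓ.1.symm (Fin.last n) = r →
      ∀ x : P, x ≠ r → ℓ.1 x ≠ Fin.last n := by
    intro ℓ h x hx he
    exact hx (by rw [← h, ← he, Equiv.symm_apply_apply])
  let del : {ℓ : IncLabelling P (n + 1) // ℓ.1.symm (Fin.last n) = r} →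
      IncLabelling {x : P // x ≠ r} n := fun ℓ =>
    ⟨{ toFun := fun x => (ℓ.1.1 x.1).castPred (key ℓ.1 ℓ.2 x.1 x.2)
       invFun := fun i => ⟨ℓ.1.1.symm i.castSucc, fun h => by
        have h2 := ℓ.1.1.symm.injective (h.trans ℓ.2.symm)
        exact (Fin.castSucc_lt_last i).ne h2⟩
       left_inv := fun x => by simp
       right_inv := fun i => by simp }, fun x y hxy => by
        have := ℓ.1.2 x.1 y.1 hxy
        simpa using this⟩
  refine Nat.card_eq_of_bijective del ⟨?_, ?_⟩
  · intro ℓ ℓ' h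
    apply Subtype.ext
    apply Subtype.ext
    ext x : 1
    by_cases hx : x = r
    · have h1 := ℓ.2
      have h2 := ℓ'.2
      rw [Equiv.symm_apply_eq] at h1 h2
      rw [hx, ← h1, ← h2]
    · have h3 : (del ℓ).1 ⟨x, hx⟩ = (del ℓ').1 ⟨x, hx⟩ := by rw [h]
      simpa [del] using h3
  · intro m
    let e : P ≃ Fin (n + 1) :=
      { toFun := fun x => if h : x = r then Fin.last n else (m.1 ⟨x, h⟩).castSucc
        invFun := fun i => Fin.lastCases r (fun j => (m.1.symm j).1) i
        left_inv := fun x => by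
          by_cases hx : x = r <;> simp [hx]
        right_inv := fun i => by
          induction i using Fin.lastCases with
          | last => simp
          | cast j => simp [(m.1.symm j).2] }
    have her : e r = Fin.last n := by simp [e]
    have hex : ∀ x (hx : x ≠ r), e x = (m.1 ⟨x, hx⟩).castSucc := by
      intro x hx
      simp [e, hx]
    refine ⟨⟨⟨e, ?_⟩, ?_⟩, ?_⟩
    · intro x y hxy
      have hx : x ≠ r := fun h => hr.not_lt (h ▸ hxy)
      rw [hex x hx]
      by_cases hy : y = r
      · rw [hy, her]
        exact Fin.castSucc_lt_last _
      · rw [hex y hy, Fin.castSucc_lt_castSucc_iff]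
        exact m.2 _ _ hxy
    · rw [Equiv.symm_apply_eq, her]
    · apply Subtype.ext
      ext x : 1
      simp [del, hex x.1 x.2]

/-- In a forest the trees below the maximal elements partition the poset. -/
lemma sum_ncard_Iic_maximal (P : Type) [Fintype P] [PartialOrder P]
    (hP : ∀ x : P, IsChain (· ≤ ·) {y : P | x < y}) :
    ∑ r : P with IsMax r, {y : P | y ≤ r}.ncard = Fintype.card P := by
  have h1 : ∀ r : P, {y : P | y ≤ r}.ncard = (Finset.univ.filter fun y : P => y ≤ r).card := by
    intro r
    rw [← Set.ncard_coe_finset]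
    simp
  simp only [h1]
  rw [← Finset.card_biUnion, ← Finset.card_univ]
  · congr 1
    ext x
    obtain ⟨r, hxr, hr⟩ := Finite.exists_le_maximal (p := fun _ : P => True) (a := x) trivial
    simp only [Finset.mem_biUnion, Finset.mem_filter, Finset.mem_univ, true_and, iff_true]
    exact ⟨r, maximal_true.1 hr, hxr⟩
  · intro r hr s hs hrs
    rw [Finset.mem_coe, Finset.mem_filter] at hr hs
    rw [Function.onFun, Finset.disjoint_left]
    intro x hx hx'
    simp only [Finset.mem_filter, Finset.mem_univ, true_and] at hx hx'
    apply hrs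
    rcases hx.eq_or_lt with rfl | hxr
    · exact hr.2.eq_of_le hx'
    rcases hx'.eq_or_lt with rfl | hxs
    · exact (hs.2.eq_of_le hx).symm
    rcases hP x hxr hxs hrs with h | h
    · exact hr.2.eq_of_le h
    · exact (hs.2.eq_of_le h).symm

/-- Deleting a maximal element `r` leaves every other principal down-set unchanged. -/
lemma prod_ncard_Iic_erase (P : Type) [Fintype P] [PartialOrder P] {r : P} (hr : IsMax r) :
    ∏ x : P, {y : P | y ≤ x}.ncard =
      {y : P | y ≤ r}.ncard *
        ∏ x : {x : P // x ≠ r}, {y : {x : P // x ≠ r} | y ≤ x}.ncard := by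
  rw [Fintype.prod_eq_mul_prod_subtype_ne _ r]
  congr 1
  refine Finset.prod_congr rfl fun x _ => ?_
  rw [← Set.ncard_image_of_injective _ Subtype.val_injective]
  congr 1
  ext y
  simp only [Set.mem_ofPred_eq, Set.mem_image]
  constructor
  · intro hy
    exact ⟨⟨y, fun h => x.2 (hr.eq_of_le (h ▸ hy)).symm⟩, hy, rfl⟩
  · rintro ⟨z, hz, rfl⟩
    exact hz

/-- The hook length formula for forests, by induction on the number of elements. -/
lemma card_incLabelling_mul_prod (n : ℕ) : ∀ (P : Type) [Fintype P] [PartialOrder P],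
    Fintype.card P = n → (∀ x : P, IsChain (· ≤ ·) {y : P | x < y}) →
      Nat.card (IncLabelling P n) * ∏ x : P, {y : P | y ≤ x}.ncard = n.factorial := by
  induction n with
  | zero =>
    intro P _ _ hc _
    have : IsEmpty P := Fintype.card_eq_zero_iff.1 hc
    have : Nat.card (IncLabelling P 0) = 1 := by
      rw [Nat.card_eq_one_iff_unique]
      exact ⟨⟨fun a b => Subtype.ext (Equiv.ext fun x => isEmptyElim x)⟩,
        ⟨⟨Equiv.equivOfIsEmpty _ _, fun x => isEmptyElim x⟩⟩⟩
    rw [this, Finset.univ_eq_empty, Finset.prod_empty, Nat.factorial_zero,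
      one_mul]
  | succ n ih =>
    intro P _ _ hc hP
    have step : ∀ r : P,
        Nat.card {ℓ : IncLabelling P (n + 1) // ℓ.1.symm (Fin.last n) = r} *
            ∏ x : P, {y : P | y ≤ x}.ncard =
          if IsMax r then n.factorial * {y : P | y ≤ r}.ncard else 0 := by
      intro r
      split_ifs with hr
      · have hc' : Fintype.card {x : P // x ≠ r} = n := by
          rw [Fintype.card_subtype_compl, Fintype.card_subtype_eq, hc, Nat.add_sub_cancel]
        have hP' : ∀ x : {x : P // x ≠ r},
            IsChain (· ≤ ·) {y : {x : P // x ≠ r} | x < y} := by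
          intro x a ha b hb hab
          exact hP x.1 ha hb fun h => hab (Subtype.ext h)
        rw [card_fiber_of_isMax P n hr, prod_ncard_Iic_erase P hr,
          ← ih {x : P // x ≠ r} hc' hP']
        ring
      · rw [card_fiber_of_not_isMax P n hr, zero_mul]
    rw [card_incLabelling_eq_sum, Finset.sum_mul, Finset.sum_congr rfl fun r _ => step r,
      ← Finset.sum_filter, ← Finset.mul_sum, sum_ncard_Iic_maximal P hP, hc,
      Nat.factorial_succ, mul_comm]

/-! ### The nesting forest of a non-crossing partition -/

lemma SubConv.refl (V : Finset ℕ) : SubConv V V :=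
  fun v hv => ⟨⟨v, hv, le_rfl⟩, ⟨v, hv, le_rfl⟩⟩

lemma SubConv.trans {U V W : Finset ℕ} (h : SubConv U V) (h' : SubConv V W) : SubConv U W := by
  intro u hu
  obtain ⟨⟨a, ha, hau⟩, ⟨b, hb, hub⟩⟩ := h u hu
  obtain ⟨⟨c, hc, hca⟩, _⟩ := h' a ha
  obtain ⟨_, ⟨d, hd, hbd⟩⟩ := h' b hb
  exact ⟨⟨c, hc, hca.trans hau⟩, ⟨d, hd, hub.trans hbd⟩⟩

lemma IsPartitionOn.eq_of_mem_s16 {n : ℕ} {π : Finset (Finset ℕ)} (hπ : IsPartitionOn n π)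
    {V W : Finset ℕ} (hV : V ∈ π) (hW : W ∈ π) {x : ℕ} (hxV : x ∈ V) (hxW : x ∈ W) : V = W :=
  (hπ.2.2 x (hπ.2.1 V hV x hxV)).unique ⟨hV, hxV⟩ ⟨hW, hxW⟩

/-- For nonempty sets, `V ⊆ Conv(W)` compares endpoints. -/
lemma subConv_iff {V W : Finset ℕ} (hV : V.Nonempty) (hW : W.Nonempty) :
    SubConv V W ↔ W.min' hW ≤ V.min' hV ∧ V.max' hV ≤ W.max' hW := by
  constructor
  · intro h
    obtain ⟨⟨a, ha, hav⟩, _⟩ := h _ (V.min'_mem hV)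
    obtain ⟨_, ⟨b, hb, hvb⟩⟩ := h _ (V.max'_mem hV)
    exact ⟨(W.min'_le a ha).trans hav, hvb.trans (W.le_max' b hb)⟩
  · intro h v hv
    exact ⟨⟨_, W.min'_mem hW, h.1.trans (V.min'_le v hv)⟩,
      ⟨_, W.max'_mem hW, (V.le_max' v hv).trans h.2⟩⟩

/-- Two blocks with the same convex hull share their minimum, hence coincide. -/
lemma IsPartitionOn.subConv_antisymm {n : ℕ} {π : Finset (Finset ℕ)} (hπ : IsPartitionOn n π)
    {V W : Finset ℕ} (hV : V ∈ π) (hW : W ∈ π) (h : SubConv V W) (h' : SubConv W V) :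
    V = W := by
  have h1 := (subConv_iff (hπ.1 V hV) (hπ.1 W hW)).1 h
  have h2 := (subConv_iff (hπ.1 W hW) (hπ.1 V hV)).1 h'
  refine hπ.eq_of_mem_s16 hV hW (V.min'_mem (hπ.1 V hV)) ?_
  rw [le_antisymm h2.1 h1.1]
  exact W.min'_mem _

/-- Two blocks whose convex hulls both contain the block `U` are nested: otherwise their
endpoints would interleave, which is a crossing. -/
lemma IsNoncrossing.subConv_total {n : ℕ} {π : Finset (Finset ℕ)} (hπ : IsPartitionOn n π)
    (hnc : IsNoncrossing π) {U V W : Finset ℕ} (hU : U ∈ π) (hV : V ∈ π) (hW : W ∈ π)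
    (hUV : SubConv U V) (hUW : SubConv U W) : SubConv V W ∨ SubConv W V := by
  by_cases hVW : V = W
  · exact Or.inl (hVW ▸ SubConv.refl V)
  have nU := hπ.1 U hU
  have nV := hπ.1 V hV
  have nW := hπ.1 W hW
  rw [subConv_iff nU nV] at hUV
  rw [subConv_iff nU nW] at hUW
  rw [subConv_iff nV nW, subConv_iff nW nV]
  have hu : U.min' nU ≤ U.max' nU := U.min'_le _ (U.max'_mem nU)
  -- the hulls of `V` and `W` overlap, and distinct blocks do not share endpoints
  have ne1 : W.min' nW ≠ V.max' nV := fun h =>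
    hVW (hπ.eq_of_mem_s16 hV hW (V.max'_mem nV) (h ▸ W.min'_mem nW))
  have ne2 : V.min' nV ≠ W.max' nW := fun h =>
    hVW (hπ.eq_of_mem_s16 hV hW (V.min'_mem nV) (h ▸ W.max'_mem nW))
  have c1 := hnc V hV W hW hVW _ (V.min'_mem nV) _ (V.max'_mem nV) _ (W.min'_mem nW)
    _ (W.max'_mem nW)
  have c2 := hnc W hW V hV (Ne.symm hVW) _ (W.min'_mem nW) _ (W.max'_mem nW) _ (V.min'_mem nV)
    _ (V.max'_mem nV)
  omega

/-- The blocks of `π`. This is a type of its own so that the nesting order does not compete with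
the inclusion order which `{V // V ∈ π}` inherits from `Finset ℕ`. -/
def Block (π : Finset (Finset ℕ)) : Type := {V // V ∈ π}

instance (π : Finset (Finset ℕ)) : Fintype (Block π) := inferInstanceAs (Fintype {V // V ∈ π})

/-- The nesting order on the blocks of a partition: `V ≤ W` iff `V ⊆ Conv(W)`. -/
abbrev nestingOrder {n : ℕ} {π : Finset (Finset ℕ)} (hπ : IsPartitionOn n π) :
    PartialOrder (Block π) where
  le V W := SubConv V.1 W.1
  le_refl V := SubConv.refl V.1
  le_trans _ _ _ := SubConv.trans
  le_antisymm V W hVW hWV := Subtype.ext (hπ.subConv_antisymm V.2 W.2 hVW hWV)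

/-- **Statement 17.** Counting monotone labellings of a forest: if `P` is a finite
poset in which every strict up-set `{y : y > x}` is a chain (so the Hasse diagram is a
forest with the maximal elements as roots), then the number of order-preserving
bijections `P → {1,…,n}` times `∏_x |{y : y ≤ x}|` equals `n!`; in particular the
number of monotone labellings of a non-crossing partition `π` times the tree factorial
`τ(π)!` equals `(#π)!`. -/
theorem monotone_labellings_count :
    (∀ (P : Type) [Fintype P] [PartialOrder P],
      (∀ x : P, IsChain (· ≤ ·) {y : P | x < y}) →
      Nat.card {ℓ : P ≃ Fin (Fintype.card P) // ∀ x y : P, x < y → ℓ x < ℓ y} *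
          ∏ x : P, {y : P | y ≤ x}.ncard =
        (Fintype.card P).factorial) ∧
    (∀ (n : ℕ) (π : Finset (Finset ℕ)), IsPartitionOn n π → IsNoncrossing π →
      Nat.card {ℓ : {V // V ∈ π} → Fin π.card //
          Function.Bijective ℓ ∧
            ∀ V W : {V // V ∈ π}, V.1 ≠ W.1 → SubConv V.1 W.1 → ℓ V < ℓ W} *
          treeFact π =
        (π.card).factorial) := by
  refine ⟨fun P _ _ hP => card_incLabelling_mul_prod _ P rfl hP, fun n π hπ hnc => ?_⟩
  let _ : PartialOrder (Block π) := nestingOrder hπ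
  have hlt : ∀ V W : Block π, V < W ↔ V.1 ≠ W.1 ∧ SubConv V.1 W.1 := by
    intro V W
    rw [lt_iff_le_and_ne, and_comm]
    exact and_congr_left' (not_congr Subtype.ext_iff)
  have hcard : ∀ V : Block π,
      (π.filter fun W => W = V.1 ∨ SubConv W V.1).card = {W : Block π | W ≤ V}.ncard := by
    intro V
    have himage : ((π.filter fun W => W = V.1 ∨ SubConv W V.1 : Finset (Finset ℕ)) :
        Set (Finset ℕ)) = (fun W : Block π => W.1) '' {W : Block π | W ≤ V} := by
      ext W
      simp only [Finset.coe_filter, Set.mem_ofPred_eq, Set.mem_image]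
      constructor
      · rintro ⟨hW, rfl | h⟩
        · exact ⟨V, le_rfl, rfl⟩
        · exact ⟨⟨W, hW⟩, h, rfl⟩
      · rintro ⟨X, hX, rfl⟩
        exact ⟨X.2, Or.inr hX⟩
    rw [← Set.ncard_coe_finset, himage]
    exact Set.ncard_image_of_injective _ fun _ _ h => Subtype.ext h
  rw [← card_incLabelling_mul_prod π.card (Block π) (Fintype.card_coe π)]
  · congr 1
    · refine Nat.card_congr
        { toFun := fun ℓ => ⟨Equiv.ofBijective ℓ.1 ℓ.2.1, fun V W h =>
            ℓ.2.2 V W ((hlt V W).1 h).1 ((hlt V W).1 h).2⟩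
          invFun := fun ℓ => ⟨fun V => ℓ.1 V, ℓ.1.bijective, fun V W h h' => ℓ.2 V W ((hlt V W).2 ⟨h, h'⟩)⟩
          left_inv := fun ℓ => rfl
          right_inv := fun ℓ => Subtype.ext (Equiv.ext fun V => rfl) }
    · rw [treeFact, ← Finset.prod_coe_sort]
      exact Finset.prod_congr rfl fun V _ => hcard V
  · intro U V hV W hW _
    exact hnc.subConv_total hπ U.2 V.2 W.2 ((hlt U V).1 hV).2 ((hlt U W).1 hW).2
end

section
/- Shuffle inverse of half-shuffle exponentials: let D be a complex vector space equipped with bilinear operations ≺ and ≻ satisfying (a ≺ b) ≺ c = a ≺ (b ≺ c + b ≻ c), (a ≻ b) ≺ c = a ≻ (b ≺ c), and a ≻ (b ≻ c) = (a ≻ b + a ≺ b) ≻ c, and set a ⧢ b = a ≺ b + a ≻ b. Let x ∈ D be such that there exists N with every parenthesized product of n ≥ N copies of x formed using ≺ and ≻ equal to zero. In the unital augmentation D̄ = ℂ1 ⊕ D (with conventions a ≺ 1 = a = 1 ≻ a and 1 ≺ a = 0 = a ≻ 1, and 1 ⧢ a = a ⧢ 1 = a), define exp_≺(x) = 1 +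 Σ_{n ≥ 1} x^{≺ n} and exp_≻(−x) = 1 + Σ_{n ≥ 1} (−x)^{≻ n} (finite sums). Then exp_≻(−x) ⧢ exp_≺(x) = 1 = exp_≺(x) ⧢ exp_≻(−x). -/
/-!
Write `P = Σ x^{≺ n}`, `Q = Σ (-x)^{≻ n}` and `a ⧢ b = a ≺ b + a ≻ b`. By nilpotency the sums
satisfy the fixed point equations `P = x + x ≺ P` and `Q = -x - Q ≻ x`.

Substituting the equation for `Q`, and then that for `P`, into `Q ≺ P` and using
`(a ≻ b) ≺ c = a ≻ (b ≺ c)` gives `Q ≺ P = -P - Q - Q ≻ P`, which is `P + Q + Q ⧢ P = 0`.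

The other product is not purely algebraic. With `E = P + Q + P ⧢ Q`, the remaining two axioms and
the fixed point equations give `E = x ≺ E - E ≻ x`. The spans of the parenthesized products of at
least `k` copies of `x` form a decreasing filtration, compatible with both products, so this
equation pushes `E` into every step of the filtration; the `N`-th step is zero.
-/

/-- Parenthesized products of `n` copies of `x` formed using the two half-shuffle
operations `l = (≺)` and `r = (≻)`. -/
inductive ParenProd {D : Type*} (l r : D → D → D) (x : D) : ℕ → D → Prop
  | base : ParenProd l r x 1 x
  | left {m n : ℕ} {a b : D} :
      ParenProd l r x m a → ParenProd l r x n b → ParenProd l r x (m + n) (l a b)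
  | right {m n : ℕ} {a b : D} :
      ParenProd l r x m a → ParenProd l r x n b → ParenProd l r x (m + n) (r a b)

/-- Left half-shuffle powers: `lpow l x n = x^{≺ (n+1)}`. -/
def lpow {D : Type*} (l : D → D → D) (x : D) : ℕ → D
  | 0 => x
  | n + 1 => l x (lpow l x n)

/-- Right half-shuffle powers of `-x`: `rpow r x n = (-x)^{≻ (n+1)}`. -/
def rpow {D : Type*} [Neg D] (r : D → D → D) (x : D) : ℕ → D
  | 0 => -x
  | n + 1 => r (rpow r x n) (-x)

section HalfShuffle

variable {D : Type*} [AddCommGroup D] [Module ℂ D]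

/-- The `k`-th step of the filtration of the subalgebra generated by `x`: the linear span of all
parenthesized products of at least `k` copies of `x`. -/
def prodFiltration (l r : D →ₗ[ℂ] D →ₗ[ℂ] D) (x : D) (k : ℕ) : Submodule ℂ D :=
  Submodule.span ℂ {y | ∃ n, k ≤ n ∧ ParenProd (fun a b => l a b) (fun a b => r a b) x n y}

variable {l r : D →ₗ[ℂ] D →ₗ[ℂ] D} {x : D}

lemma self_mem_prodFiltration : x ∈ prodFiltration l r x 1 :=
  Submodule.subset_span ⟨1, le_rfl, .base⟩

lemma prodFiltration_antitone : Antitone (prodFiltration l r x) := fun _ _ h =>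
  Submodule.span_mono fun _ ⟨n, hn, hy⟩ => ⟨n, h.trans hn, hy⟩

lemma left_mem_prodFiltration {i j : ℕ} {a b : D} (ha : a ∈ prodFiltration l r x i)
    (hb : b ∈ prodFiltration l r x j) : l a b ∈ prodFiltration l r x (i + j) := by
  refine LinearMap.BilinMap.apply_apply_mem_of_mem_span _ _ _ l ?_ a b ha hb
  rintro a ⟨m, hm, ha⟩ b ⟨n, hn, hb⟩
  exact Submodule.subset_span ⟨m + n, by omega, .left ha hb⟩

lemma right_mem_prodFiltration {i j : ℕ} {a b : D} (ha : a ∈ prodFiltration l r x i)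
    (hb : b ∈ prodFiltration l r x j) : r a b ∈ prodFiltration l r x (i + j) := by
  refine LinearMap.BilinMap.apply_apply_mem_of_mem_span _ _ _ r ?_ a b ha hb
  rintro a ⟨m, hm, ha⟩ b ⟨n, hn, hb⟩
  exact Submodule.subset_span ⟨m + n, by omega, .right ha hb⟩

lemma lpow_mem_prodFiltration (n : ℕ) :
    lpow (fun a b => l a b) x n ∈ prodFiltration l r x (n + 1) := by
  induction n with
  | zero => exact self_mem_prodFiltration
  | succ n ih =>
    rw [add_comm]
    exact left_mem_prodFiltration self_mem_prodFiltration ih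

lemma rpow_mem_prodFiltration (n : ℕ) :
    rpow (fun a b => r a b) x n ∈ prodFiltration l r x (n + 1) := by
  induction n with
  | zero => exact neg_mem self_mem_prodFiltration
  | succ n ih => exact right_mem_prodFiltration ih (neg_mem self_mem_prodFiltration)

/-- Truncated form of the fixed point equation `P = x + x ≺ P`. -/
lemma sum_lpow_add (N : ℕ) :
    (∑ n ∈ Finset.range N, lpow (fun a b => l a b) x n) + lpow (fun a b => l a b) x N =
      x + l x (∑ n ∈ Finset.range N, lpow (fun a b => l a b) x n) := by
  rw [← Finset.sum_range_succ, Finset.sum_range_succ', map_sum, add_comm]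
  rfl

/-- Truncated form of the fixed point equation `Q = -x - Q ≻ x`. -/
lemma sum_rpow_add (N : ℕ) :
    (∑ n ∈ Finset.range N, rpow (fun a b => r a b) x n) + rpow (fun a b => r a b) x N =
      -x + r (∑ n ∈ Finset.range N, rpow (fun a b => r a b) x n) (-x) := by
  rw [← Finset.sum_range_succ, Finset.sum_range_succ', map_sum, LinearMap.sum_apply, add_comm]
  rfl

end HalfShuffle

/-- **Statement 18.** Shuffle inverse of half-shuffle exponentials: in a shuffle
(dendriform) algebra `D`, if all parenthesized products of `n ≥ N` copies of `x`
vanish, then in the unital augmentation `D̄ = ℂ1 ⊕ D` (with `1 ≺ a = 0 = a ≻ 1`,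
`a ≺ 1 = a = 1 ≻ a`) one has
`exp_≻(-x) ⧢ exp_≺(x) = 1 = exp_≺(x) ⧢ exp_≻(-x)`.
Writing `exp_≺(x) = 1 + P` with `P = Σ_{n ≥ 1} x^{≺ n}` and `exp_≻(-x) = 1 + Q` with
`Q = Σ_{n ≥ 1} (-x)^{≻ n}` (finite sums by nilpotency), this is equivalent to the two
identities `P + Q + Q ⧢ P = 0` and `P + Q + P ⧢ Q = 0` in `D`, which is the statement
below. -/
theorem halfshuffle_exponentials_inverse
    (D : Type*) [AddCommGroup D] [Module ℂ D]
    (l r : D →ₗ[ℂ] D →ₗ[ℂ] D)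
    (ax1 : ∀ a b c : D, l (l a b) c = l a (l b c + r b c))
    (ax2 : ∀ a b c : D, l (r a b) c = r a (l b c))
    (ax3 : ∀ a b c : D, r a (r b c) = r (r a b + l a b) c)
    (x : D) (N : ℕ)
    (hnil : ∀ (n : ℕ) (y : D), N ≤ n →
      ParenProd (fun a b => l a b) (fun a b => r a b) x n y → y = 0) :
    (∑ n ∈ Finset.range N, lpow (fun a b => l a b) x n) +
        (∑ n ∈ Finset.range N, rpow (fun a b => r a b) x n) +
        (l (∑ n ∈ Finset.range N, rpow (fun a b => r a b) x n)
            (∑ n ∈ Finset.range N, lpow (fun a b => l a b) x n) +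
          r (∑ n ∈ Finset.range N, rpow (fun a b => r a b) x n)
            (∑ n ∈ Finset.range N, lpow (fun a b => l a b) x n)) = 0 ∧
    (∑ n ∈ Finset.range N, lpow (fun a b => l a b) x n) +
        (∑ n ∈ Finset.range N, rpow (fun a b => r a b) x n) +
        (l (∑ n ∈ Finset.range N, lpow (fun a b => l a b) x n)
            (∑ n ∈ Finset.range N, rpow (fun a b => r a b) x n) +
          r (∑ n ∈ Finset.range N, lpow (fun a b => l a b) x n)
            (∑ n ∈ Finset.range N, rpow (fun a b => r a b) x n)) = 0 := by
  have hbot : ∀ y ∈ prodFiltration l r x N, y = 0 := by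
    intro y hy
    have h : prodFiltration l r x N ≤ ⊥ := by
      refine Submodule.span_le.2 ?_
      rintro y ⟨n, hn, hy⟩
      exact hnil n y hn hy
    exact (Submodule.mem_bot ℂ).1 (h hy)
  have hP := sum_lpow_add (l := l) (x := x) N
  have hQ := sum_rpow_add (r := r) (x := x) N
  rw [hbot _ (prodFiltration_antitone N.le_succ (lpow_mem_prodFiltration N)), add_zero] at hP
  rw [hbot _ (prodFiltration_antitone N.le_succ (rpow_mem_prodFiltration N)), add_zero,
    map_neg] at hQ
  have hPm : (∑ n ∈ Finset.range N, lpow (fun a b => l a b) x n) ∈ prodFiltration l r x 0 :=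
    sum_mem fun n _ => prodFiltration_antitone (Nat.zero_le _) (lpow_mem_prodFiltration n)
  have hQm : (∑ n ∈ Finset.range N, rpow (fun a b => r a b) x n) ∈ prodFiltration l r x 0 :=
    sum_mem fun n _ => prodFiltration_antitone (Nat.zero_le _) (rpow_mem_prodFiltration n)
  generalize (∑ n ∈ Finset.range N, lpow (fun a b => l a b) x n) = P at *
  generalize (∑ n ∈ Finset.range N, rpow (fun a b => r a b) x n) = Q at *
  have hxP : l x P = P - x := by rw [eq_sub_iff_add_eq, add_comm, ← hP]
  have hQx : r Q x = -x - Q := by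
    have h : Q + r Q x = -x := by
      nth_rewrite 1 [hQ]
      abel
    rw [← h]
    abel
  constructor
  · have h : l Q P = -l x P - r Q (l x P) := by
      nth_rewrite 1 [hQ]
      simp only [map_add, map_neg, LinearMap.add_apply, LinearMap.neg_apply, ax2]
      abel
    rw [h, hxP, map_sub, hQx]
    abel
  · have h1 : l P Q = l x Q + l x (l P Q + r P Q) := by
      nth_rewrite 1 [hP]
      simp only [map_add, LinearMap.add_apply, ax1]
    have h2 : r P Q = -r P x - r (l P Q + r P Q) x := by
      nth_rewrite 1 [hQ]
      rw [map_add, map_neg, map_neg, ax3, add_comm (r P Q)]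
      abel
    have hEm : P + Q + (l P Q + r P Q) ∈ prodFiltration l r x 0 :=
      add_mem (add_mem hPm hQm)
        (add_mem (left_mem_prodFiltration (i := 0) (j := 0) hPm hQm)
          (right_mem_prodFiltration (i := 0) (j := 0) hPm hQm))
    have hE : P + Q + (l P Q + r P Q) =
        l x (P + Q + (l P Q + r P Q)) - r (P + Q + (l P Q + r P Q)) x := by
      have h3 : l P Q + r P Q = l x Q + l x (l P Q + r P Q) +
          (-r P x - r (l P Q + r P Q) x) := by rw [← h1, ← h2]
      generalize l P Q + r P Q = S at h3 ⊢
      simp only [map_add, LinearMap.add_apply, hxP, hQx]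
      nth_rewrite 1 [h3]
      abel
    generalize P + Q + (l P Q + r P Q) = E at *
    have hmem : ∀ k, E ∈ prodFiltration l r x k := by
      intro k
      induction k with
      | zero => exact hEm
      | succ k ih =>
        rw [hE]
        refine sub_mem ?_ (right_mem_prodFiltration ih self_mem_prodFiltration)
        rw [add_comm]
        exact left_mem_prodFiltration self_mem_prodFiltration ih
    exact hbot E (hmem N)
end
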